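/- arXiv:1001.1293 — 2 statements merged into one kernel-verified Lean document; each statement's English description precedes it below -/
import Mathlib

section
/- There exist constants c₄, c₅ > 0 (depending only on ξ and the sequence (x_k)) such that for every polynomial R ∈ ℤ[T] of degree 3 and every integer k ≥ 1 with X_k > c₄·‖R‖^(γ²), one has {x_{k,0}·R(ξ)} ≥ c₅·‖R‖^(−γ²). -/
open Polynomial Filter

noncomputable def gold : ℝ := (1 + Real.sqrt 5) / 2

def Mmat (k : ℕ) : Matrix (Fin 2) (Fin 2) ℤ := !![3, (-1)^k; (-1)^(k+1), 0]

noncomputable def Xnorm (x : ℕ → Matrix (Fin 2) (Fin 2) ℤ) (k : ℕ) : ℝ :=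
  max |(x k 0 0 : ℝ)| (max |(x k 0 1 : ℝ)| |(x k 1 1 : ℝ)|)

def MarkoffSeq (ξ : ℝ) (x : ℕ → Matrix (Fin 2) (Fin 2) ℤ) : Prop :=
  (∀ k, 1 ≤ k → x k 0 1 = x k 1 0) ∧
  (∀ k, 1 ≤ k → (x k).det = 1) ∧
  ∃ c₁ c₂ c₃ : ℝ, 0 < c₁ ∧ 0 < c₂ ∧ 0 < c₃ ∧ ∀ k, 1 ≤ k →
    (c₁ * Xnorm x k ^ gold ≤ Xnorm x (k+1) ∧ Xnorm x (k+1) ≤ c₂ * Xnorm x k ^ gold) ∧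
    (|(x k 0 0 : ℝ) * ξ - (x k 0 1 : ℝ)| ≤ c₃ / Xnorm x k ∧
     |(x k 0 1 : ℝ) * ξ - (x k 1 1 : ℝ)| ≤ c₃ / Xnorm x k) ∧
    (x (k+2) = x (k+1) * Mmat (k+1) * x k ∧ x (k+2) = x k * Mmat k * x (k+1)) ∧
    (Xnorm x k < Xnorm x (k+1) ∧ Xnorm x k < (1 + ξ^2) * |(x k 0 0 : ℝ)|)

def polyNorm (P : Polynomial ℤ) : ℕ := P.support.sup fun i => (P.coeff i).natAbs

noncomputable def distInt (η : ℝ) : ℝ := |η - round η|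

noncomputable def ratHeight (α : ℚ) : ℝ := max |(α.num : ℝ)| (α.den : ℝ)

def IsMinIntPoly (α : ℂ) (P : Polynomial ℤ) : Prop :=
  P ≠ 0 ∧ Polynomial.aeval α P = 0 ∧ P.content = 1 ∧ 0 < P.leadingCoeff ∧
  ∀ Q : Polynomial ℤ, Q ≠ 0 → Polynomial.aeval α Q = 0 → P.degree ≤ Q.degree

noncomputable def Qpoly (x : ℕ → Matrix (Fin 2) (Fin 2) ℤ) (k : ℕ) : Polynomial ℤ :=
  Polynomial.C (x k 0 1 * x (k+1) 1 1 - x k 1 1 * x (k+1) 0 1)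
  - Polynomial.C (x k 0 0 * x (k+1) 1 1 - x k 1 1 * x (k+1) 0 0) * Polynomial.X
  + Polynomial.C (x k 0 0 * x (k+1) 0 1 - x k 0 1 * x (k+1) 0 0) * Polynomial.X ^ 2

/-!
Let `u k`, `v k`, `w k` be the entries of `x k`. Up to an error `O(‖R‖ / X k)`, the number
`u k * R(ξ)` agrees modulo `1` with `p * (w k * ξ)`, where `p` is the leading coefficient of `R`.
The recurrence makes `w (k + 3) * ξ + w k * ξ` nearly an integer, so that for `k = m + 2 + 3 * j`
the number `u m * (w k * ξ)` lies within `O(1 / X (m + 1))` of an integer `N` with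
`gcd (u m) N ∣ 2`; for `1 ≤ j` it is also at distance at least `1 / X (m + 1)` from `N`.

Let `n` be the nearest integer to `p * (w k * ξ)`, and let `‖R‖` be small compared to `X (m + 1)`.
If `p * N ≠ u m * n`, multiplying by `u m` shows that `p * (w k * ξ)` is at distance at least
`1 / (2 * X m)` from `n`. Otherwise `u m ∣ 2 * p`, which bounds `X m` by a multiple of `‖R‖`, and
the distance is at least `1 / (2 * X (m + 1))` unless `j = 0`. Choose `m ≡ k + 1 [MOD 3]` minimal
with `X (m + 1)` larger than a multiple of `‖R‖`. Then `X m ≪ ‖R‖ ^ γ ^ 2`, because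
`X (m - 2) ≪ ‖R‖`; in the second case `X (m + 2) ≪ ‖R‖ ^ γ ^ 2` as well, which rules out `j = 0`.
-/

theorem abs_coeff_le_polyNorm (R : Polynomial ℤ) (i : ℕ) : |(R.coeff i : ℝ)| ≤ polyNorm R := by
  rw [← Int.cast_abs, ← Nat.cast_natAbs, Nat.cast_le]
  by_cases hi : i ∈ R.support
  · exact Finset.le_sup (f := fun j => (R.coeff j).natAbs) hi
  · simp [Polynomial.notMem_support_iff.1 hi]

theorem one_le_polyNorm {R : Polynomial ℤ} (hR : R ≠ 0) : (1 : ℝ) ≤ polyNorm R := by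
  refine le_trans ?_ (abs_coeff_le_polyNorm R R.natDegree)
  exact_mod_cast Int.one_le_abs (Polynomial.leadingCoeff_ne_zero.2 hR)

theorem Xnorm_eq_natCast (x : ℕ → Matrix (Fin 2) (Fin 2) ℤ) (k : ℕ) :
    Xnorm x k = (max (x k 0 0).natAbs (max (x k 0 1).natAbs (x k 1 1).natAbs) : ℕ) := by
  simp only [Xnorm, Nat.cast_max, Nat.cast_natAbs, Int.cast_abs]

theorem Xnorm_nonneg (x : ℕ → Matrix (Fin 2) (Fin 2) ℤ) (k : ℕ) : 0 ≤ Xnorm x k :=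
  le_max_of_le_left (abs_nonneg _)

/-- The entries `x k = !![u k, v k; v k, w k]` of a sequence of symmetric matrices of determinant
one with `x (k + 2) = x k * !![3, e k; -e k, 0] * x (k + 1)`, where `e k` is an alternating sign.
Symmetry of `x (k + 2)` is expressed by the two formulas for `v (k + 2)`. -/
structure MarkoffRec {A : Type*} [CommRing A] (u v w e : ℕ → A) : Prop where
  sign_mul_self : ∀ k, e k * e k = 1
  sign_succ : ∀ k, e (k + 1) = -e k
  det : ∀ k, u k * w k - v k * v k = 1
  rec_u : ∀ k, u (k + 2) = (3 * u k - e k * v k) * u (k + 1) + e k * u k * v (k + 1)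
  rec_v : ∀ k, v (k + 2) = (3 * u k - e k * v k) * v (k + 1) + e k * u k * w (k + 1)
  rec_v' : ∀ k, v (k + 2) = (3 * v k - e k * w k) * u (k + 1) + e k * v k * v (k + 1)
  rec_w : ∀ k, w (k + 2) = (3 * v k - e k * w k) * v (k + 1) + e k * v k * w (k + 1)

namespace MarkoffRec

section CommRing

variable {A : Type*} [CommRing A] {u v w e : ℕ → A}

theorem sign_add_two (h : MarkoffRec u v w e) (k : ℕ) : e (k + 2) = e k := by
  rw [h.sign_succ, h.sign_succ, neg_neg]

theorem u_mul_v_sub (h : MarkoffRec u v w e) (k : ℕ) :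
    u k * v (k + 2) - v k * u (k + 2) = -e k * u (k + 1) := by
  rw [h.rec_v' k, h.rec_u k]
  linear_combination -e k * u (k + 1) * h.det k

theorem u_mul_w_sub (h : MarkoffRec u v w e) (k : ℕ) :
    u k * w (k + 2) - v k * v (k + 2) = -e k * v (k + 1) := by
  rw [h.rec_w k, h.rec_v k]
  linear_combination -e k * v (k + 1) * h.det k

theorem v_mul_w_sub (h : MarkoffRec u v w e) (k : ℕ) :
    v (k + 1) * w (k + 2) - w (k + 1) * v (k + 2) = -3 * v k + e k * w k := by
  rw [h.rec_w k, h.rec_v' k]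
  linear_combination (-3 * v k + e k * w k) * h.det (k + 1)

theorem w_add_three_add_w (h : MarkoffRec u v w e) (k : ℕ) :
    w (k + 3) + w k = 3 * (v (k + 1) * v (k + 2) + e k * v k) := by
  have hw : w (k + 3) = (3 * v (k + 1) - e (k + 1) * w (k + 1)) * v (k + 2)
      + e (k + 1) * v (k + 1) * w (k + 2) := h.rec_w (k + 1)
  rw [hw, h.sign_succ]
  linear_combination -e k * h.v_mul_w_sub k - w k * h.sign_mul_self k

theorem u_mul_add_two_mul_v (h : MarkoffRec u v w e) (k : ℕ) :
    u k * (v (k + 1) * w (k + 3) - e (k + 1) * w (k + 2)) + 2 * v (k + 1) =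
      u (k + 1) * (3 * u k * w (k + 1) * v (k + 2)
        - (3 * u k - e k * v k) * (3 * v k - e k * w k)) := by
  rw [h.sign_succ]
  linear_combination u k * v (k + 1) * h.w_add_three_add_w k
    - 3 * u k * v (k + 2) * h.det (k + 1) - v (k + 1) * h.det k + e k * h.u_mul_w_sub k
    - v (k + 1) * h.sign_mul_self k - (3 * u k - e k * v k) * h.rec_v' k
    + v k ^ 2 * v (k + 1) * h.sign_mul_self k

end CommRing

variable {u v w e : ℕ → ℤ}

theorem abs_sign (h : MarkoffRec u v w e) (k : ℕ) : |(e k : ℝ)| = 1 := by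
  rcases Int.isUnit_iff.1 (IsUnit.of_mul_eq_one _ (h.sign_mul_self k)) with hk | hk <;> simp [hk]

theorem tendsto_sign_mul (h : MarkoffRec u v w e) {f : ℕ → ℝ} (hf : Tendsto f atTop (nhds 0)) :
    Tendsto (fun k => e k * f k) atTop (nhds 0) :=
  bdd_le_mul_tendsto_zero' 1 (.of_forall fun k => (h.abs_sign k).le) hf

theorem gcd_u_dvd_two (h : MarkoffRec u v w e) (k : ℕ) :
    Int.gcd (u (k + 1)) (v (k + 1) * w (k + 3) - e (k + 1) * w (k + 2)) ∣ 2 := by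
  set N := v (k + 1) * w (k + 3) - e (k + 1) * w (k + 2) with hN
  have hu : (Int.gcd (u (k + 1)) N : ℤ) ∣ u (k + 1) := Int.gcd_dvd_left ..
  have hv : (Int.gcd (u (k + 1)) N : ℤ) ∣ 2 * v (k + 1) := by
    refine (dvd_add_right ((Int.gcd_dvd_right (u (k + 1)) N).mul_left (u k))).1 ?_
    rw [hN, h.u_mul_add_two_mul_v]
    exact hu.mul_right _
  have hcop : IsCoprime (u (k + 1)) (v (k + 1)) :=
    ⟨w (k + 1), -v (k + 1), by linear_combination h.det (k + 1)⟩
  exact_mod_cast (hcop.of_isCoprime_of_dvd_left hu).dvd_of_dvd_mul_right hv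

theorem u_mul_v_mul_sub_w (h : MarkoffRec u v w e) (ξ : ℝ) (k : ℕ) :
    u k * (v k * ξ - w k : ℝ) + 1 = ξ * (u k * (u k * ξ - v k)) - (u k * ξ - v k) ^ 2 := by
  have hdet : (u k * w k - v k * v k : ℝ) = 1 := mod_cast h.det k
  linear_combination -hdet

theorem u_mul_sub_v_mul (h : MarkoffRec u v w e) (ξ : ℝ) (k : ℕ) :
    u k * (v (k + 2) * ξ - w (k + 2) : ℝ) - v k * (u (k + 2) * ξ - v (k + 2)) =
      -e k * (u (k + 1) * ξ - v (k + 1)) := by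
  have hv : (u k * v (k + 2) - v k * u (k + 2) : ℝ) = -e k * u (k + 1) :=
    mod_cast h.u_mul_v_sub k
  have hw : (u k * w (k + 2) - v k * v (k + 2) : ℝ) = -e k * v (k + 1) :=
    mod_cast h.u_mul_w_sub k
  linear_combination ξ * hv - hw

theorem u_mul_w_add_two_mul (h : MarkoffRec u v w e) (ξ : ℝ) (k : ℕ) :
    u k * (w (k + 2) * ξ) - (v k * w (k + 2) - e k * w (k + 1) : ℤ) =
      v k * (v (k + 2) * ξ - w (k + 2)) - e k * (v (k + 1) * ξ - w (k + 1)) := by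
  have hw : (u k * w (k + 2) - v k * v (k + 2) : ℝ) = -e k * v (k + 1) :=
    mod_cast h.u_mul_w_sub k
  push_cast
  linear_combination ξ * hw

theorem w_add_three_mul_add (h : MarkoffRec u v w e) (ξ : ℝ) (k : ℕ) :
    w (k + 3) * ξ + w k * ξ - (3 * (v (k + 1) * w (k + 2) + e k * w k) : ℤ) =
      3 * (v (k + 1) * (v (k + 2) * ξ - w (k + 2)) + e k * (v k * ξ - w k)) := by
  have hw : (w (k + 3) + w k : ℝ) = 3 * (v (k + 1) * v (k + 2) + e k * v k) :=
    mod_cast h.w_add_three_add_w k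
  push_cast
  linear_combination ξ * hw

theorem u_mul_w_add_five_mul (h : MarkoffRec u v w e) (ξ : ℝ) (m : ℕ) :
    u m * (w (m + 5) * ξ) - (-(v m * w (m + 2) - e m * w (m + 1))
      + u m * (3 * (v (m + 3) * w (m + 4) + e m * w (m + 2))) : ℤ) =
    3 * u m * (v (m + 3) * (v (m + 4) * ξ - w (m + 4)) + e m * (v (m + 2) * ξ - w (m + 2)))
      - (v m * (v (m + 2) * ξ - w (m + 2)) - e m * (v (m + 1) * ξ - w (m + 1))) := by
  have hw := h.w_add_three_mul_add ξ (m + 2)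
  rw [h.sign_add_two] at hw
  have hu := h.u_mul_w_add_two_mul ξ m
  push_cast at hw hu ⊢
  linear_combination (u m : ℝ) * hw - hu

theorem remainder_eq (h : MarkoffRec u v w e) {ξ : ℝ} {T ρ β : ℕ → ℝ}
    (hT : ∀ k, (u k * u (k + 1) : ℝ) = T k * u (k + 2)) (hρ : ∀ k, (v k : ℝ) = ρ k * u k)
    (hβ : ∀ k, (e k * (u k * (v k * ξ - w k) + 1) : ℝ) = β k) (m : ℕ) :
    (e m * (u (m + 1) *
      (3 * u m * (v (m + 3) * (v (m + 4) * ξ - w (m + 4)) + e m * (v (m + 2) * ξ - w (m + 2)))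
      - (v m * (v (m + 2) * ξ - w (m + 2)) - e m * (v (m + 1) * ξ - w (m + 1))))) : ℝ) =
    T m * (3 * (ρ (m + 3) * T (m + 2) * β (m + 4)) - ρ m * β (m + 2)) - (1 + 3 * T m)
      + e m * (T m * (ρ m - 3 * (ρ (m + 3) * T (m + 2))) + 3 * T m * β (m + 2) - β (m + 1)) := by
  have he (k : ℕ) : (e k * e k : ℝ) = 1 := mod_cast h.sign_mul_self k
  have hub (k : ℕ) : u k * (v k * ξ - w k : ℝ) = -1 + e k * β k := by
    linear_combination e k * hβ k - (u k * (v k * ξ - w k) + 1 : ℝ) * he k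
  have hub₁ := hub (m + 1)
  have hub₂ := hub (m + 2)
  have hub₄ := hub (m + 4)
  rw [h.sign_succ, Int.cast_neg] at hub₁
  rw [h.sign_add_two] at hub₂
  rw [h.sign_add_two (m + 2), h.sign_add_two] at hub₄
  have huu : u m * u (m + 1) * (v (m + 2) * ξ - w (m + 2) : ℝ) = T m * (-1 + e m * β (m + 2)) := by
    linear_combination (v (m + 2) * ξ - w (m + 2) : ℝ) * hT m + T m * hub₂
  have hvu : v m * u (m + 1) * (v (m + 2) * ξ - w (m + 2) : ℝ) =
      ρ m * (T m * (-1 + e m * β (m + 2))) := by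
    linear_combination (u (m + 1) * (v (m + 2) * ξ - w (m + 2)) : ℝ) * hρ m + ρ m * huu
  have huuv : u m * u (m + 1) * v (m + 3) * (v (m + 4) * ξ - w (m + 4) : ℝ) =
      T m * (ρ (m + 3) * T (m + 2) * (-1 + e m * β (m + 4))) := by
    linear_combination (v (m + 3) * (v (m + 4) * ξ - w (m + 4)) : ℝ) * hT m
      + (T m * u (m + 2) * (v (m + 4) * ξ - w (m + 4)) : ℝ) * hρ (m + 3)
      + (T m * ρ (m + 3) * (v (m + 4) * ξ - w (m + 4))) * hT (m + 2)
      + T m * ρ (m + 3) * T (m + 2) * hub₄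
  linear_combination (3 * e m : ℝ) * huuv + (3 * e m * e m : ℝ) * huu - (e m : ℝ) * hvu
    + (e m * e m : ℝ) * hub₁
    + (T m * (3 * (ρ (m + 3) * T (m + 2) * β (m + 4)) - ρ m * β (m + 2)) - 3 * T m - 1
      + e m * (3 * T m * β (m + 2) - β (m + 1))) * he m

end MarkoffRec

theorem one_sub_le_or_le_gcd_mul {U N p n : ℤ} (hU : U ≠ 0) (hp : p ≠ 0) (θ : ℝ) :
    1 - |p * (U * θ - N)| ≤ |(U : ℝ)| * |p * θ - n| ∨
      |(U : ℝ)| ≤ U.gcd N * |(p : ℝ)| ∧ |U * θ - N| ≤ U.gcd N * |p * θ - n| := by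
  have hsplit : (U : ℝ) * (p * θ - n) = p * (U * θ - N) + (p * N - U * n : ℤ) := by
    push_cast; ring
  by_cases hZ : p * N - U * n = 0
  · right
    have hdvd : U ∣ U.gcd N * p := by
      rw [Int.coe_gcd]
      exact dvd_gcd_mul_of_dvd_mul ⟨n, by linear_combination hZ⟩
    have hUp : |(U : ℝ)| ≤ U.gcd N * |(p : ℝ)| := by
      have hne : (U.gcd N : ℤ) * p ≠ 0 :=
        mul_ne_zero (mod_cast (Int.gcd_pos_of_ne_zero_left N hU).ne') hp
      have hle := Int.le_of_dvd (abs_pos.2 hne) ((abs_dvd_abs _ _).2 hdvd)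
      rw [abs_mul, Nat.abs_cast] at hle
      exact_mod_cast hle
    refine ⟨hUp, ?_⟩
    have hp' : 0 < |(p : ℝ)| := abs_pos.2 (Int.cast_ne_zero.2 hp)
    rw [hZ, Int.cast_zero, add_zero] at hsplit
    refine le_of_mul_le_mul_left ?_ hp'
    calc |(p : ℝ)| * |U * θ - N| = |(U : ℝ)| * |p * θ - n| := by
          rw [← abs_mul, ← hsplit, abs_mul]
      _ ≤ U.gcd N * |(p : ℝ)| * |p * θ - n| := by gcongr
      _ = |(p : ℝ)| * (U.gcd N * |p * θ - n|) := by ring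
  · left
    have hZ1 : (1 : ℝ) ≤ |((p * N - U * n : ℤ) : ℝ)| := by exact_mod_cast Int.one_le_abs hZ
    have htri := abs_sub (U * (p * θ - n)) (p * (U * θ - N) : ℝ)
    rw [hsplit, add_sub_cancel_left, ← hsplit, abs_mul (U : ℝ)] at htri
    linarith

theorem exists_int_abs_sub_neg_one_pow_mul_le {y δ : ℕ → ℝ}
    (hy : ∀ i, ∃ A : ℤ, |y (i + 1) + y i - A| ≤ δ i) (hδ : ∀ i, 2 * δ (i + 1) ≤ δ i) (j : ℕ) :
    ∃ A : ℤ, |y j - (-1) ^ j * y 0 - A| ≤ 2 * δ 0 := by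
  induction j generalizing y δ with
  | zero =>
    obtain ⟨A, hA⟩ := hy 0
    exact ⟨0, by simpa using (abs_nonneg _).trans hA⟩
  | succ j ih =>
    obtain ⟨A, hA⟩ := hy 0
    obtain ⟨A', hA'⟩ := ih (y := fun i => y (i + 1)) (δ := fun i => δ (i + 1))
      (fun i => hy (i + 1)) (fun i => hδ (i + 1))
    refine ⟨A' + (-1) ^ j * A, ?_⟩
    have hstep : |(-1) ^ j * (y 1 + y 0 - A)| ≤ δ 0 := by
      rwa [abs_mul, abs_pow, abs_neg, abs_one, one_pow, one_mul]
    calc |y (j + 1) - (-1) ^ (j + 1) * y 0 - (A' + (-1) ^ j * A : ℤ)|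
        = |(y (j + 1) - (-1) ^ j * y 1 - A') + (-1) ^ j * (y 1 + y 0 - A)| := by
          congr 1; push_cast; ring
      _ ≤ 2 * δ 1 + δ 0 := (abs_add_le _ _).trans (add_le_add hA' hstep)
      _ ≤ 2 * δ 0 := by linarith [hδ 0]

theorem exists_gcd_eq_abs_abs_sub_le {U A : ℤ} (N : ℤ) {θ θ' ε : ℝ} (j : ℕ)
    (h : |U * (θ' - (-1) ^ j * θ - A)| ≤ ε) :
    ∃ N' : ℤ, U.gcd N' = U.gcd N ∧ |(|U * θ' - N'| - |U * θ - N|)| ≤ ε := by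
  refine ⟨(-1) ^ j * N + U * A, ?_, ?_⟩
  · rw [Int.gcd_add_mul_left_right]
    rcases neg_one_pow_eq_or ℤ j with hj | hj <;> simp [hj]
  · have hsign : |U * θ - N| = |(-1) ^ j * (U * θ - N)| := by
      rw [abs_mul, abs_pow, abs_neg, abs_one, one_pow, one_mul]
    rw [hsign]
    refine (abs_abs_sub_abs_le _ _).trans (le_of_eq_of_le ?_ h)
    push_cast
    congr 1
    ring

section RpowGrowth

variable {X : ℕ → ℝ} {b g : ℝ}

theorem le_mul_rpow_sq_of_le_mul_rpow (hpos : ∀ k, 0 < X k) (hb : 0 < b) (hg : 0 ≤ g)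
    (hX : ∀ k, X (k + 1) ≤ b * X k ^ g) {k : ℕ} {y : ℝ} (hy : X k ≤ y) :
    X (k + 2) ≤ b * b ^ g * y ^ g ^ 2 := by
  have hy₀ : 0 < y := (hpos k).trans_le hy
  calc X (k + 2) ≤ b * X (k + 1) ^ g := hX (k + 1)
    _ ≤ b * (b * y ^ g) ^ g := by
      have := (hpos (k + 1)).le
      gcongr
      exact (hX k).trans (by gcongr; exact (hpos k).le)
    _ = b * b ^ g * y ^ g ^ 2 := by
      rw [Real.mul_rpow hb.le (by positivity), ← Real.rpow_mul hy₀.le, sq, mul_assoc]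

/- Take the least `m` in the residue class of `k + 1` modulo `3` with `m₀ ≤ m` and
`C * H ≤ X (m + 1)`: minimality bounds `X m`, since `X (m - 2) < C * H` or `m < m₀ + 3`. -/
theorem exists_index_of_le_mul_rpow (hpos : ∀ k, 0 < X k) (hmono : StrictMono X)
    (htop : Tendsto X atTop atTop) (hb : 0 < b) (hg : 0 ≤ g)
    (hX : ∀ k, X (k + 1) ≤ b * X k ^ g) {C : ℝ} (hC : 0 < C) (m₀ : ℕ) :
    ∃ K, 0 < K ∧ ∀ H, 1 ≤ H → ∀ k, K * H ^ g ^ 2 < X k →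
      ∃ m j, k = m + 2 + 3 * j ∧ m₀ ≤ m ∧ C * H ≤ X (m + 1) ∧ X m ≤ K * H ^ g ^ 2 := by
  have hX₀ := hpos (m₀ + 2)
  set K := X (m₀ + 2) + b * b ^ g * C ^ g ^ 2
  refine ⟨K, by positivity, fun H hH k hk => ?_⟩
  have hH_pow : 1 ≤ H ^ g ^ 2 := Real.one_le_rpow hH (sq_nonneg g)
  have hinit : X (m₀ + 2) ≤ K * H ^ g ^ 2 :=
    (le_add_of_nonneg_right (by positivity)).trans (le_mul_of_one_le_right (by positivity) hH_pow)
  have hmk : m₀ + 2 < k := hmono.lt_iff_lt.1 (hinit.trans_lt hk)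
  have hex : ∃ m, m₀ ≤ m ∧ m % 3 = (k + 1) % 3 ∧ C * H ≤ X (m + 1) := by
    obtain ⟨M, hM⟩ := eventually_atTop.1 (htop.eventually_ge_atTop (C * H))
    exact ⟨k + 1 + 3 * M, by omega, by omega, hM _ (by omega)⟩
  classical
  obtain ⟨hm₀, hmod, hCH⟩ := Nat.find_spec hex
  have hmin (i : ℕ) (hi₀ : m₀ ≤ i) (hi : i % 3 = (k + 1) % 3) (him : i < Nat.find hex) :
      X (i + 3) ≤ K * H ^ g ^ 2 := by
    have hlt : X (i + 1) < C * H := lt_of_not_ge fun h => Nat.find_min hex him ⟨hi₀, hi, h⟩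
    refine (le_mul_rpow_sq_of_le_mul_rpow hpos hb hg hX hlt.le).trans ?_
    rw [Real.mul_rpow hC.le (by positivity), ← mul_assoc]
    gcongr
    exact le_add_of_nonneg_left hX₀.le
  set m := Nat.find hex
  have hle : m + 2 ≤ k := by
    by_contra! hlt
    have hk₁ := hmin (k - 2) (by omega) (by omega) (by omega)
    exact (hk.trans (hmono (by omega : k < k - 2 + 3))).not_ge hk₁
  refine ⟨m, (k - m - 2) / 3, by omega, hm₀, hCH, ?_⟩
  rcases lt_or_ge m (m₀ + 3) with hlt | hge
  · exact (hmono.monotone (by omega)).trans hinit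
  · simpa [Nat.sub_add_cancel (by omega : 3 ≤ m)] using
      hmin (m - 3) (by omega) (by omega) (by omega)

end RpowGrowth

/-- Integer sequences satisfying `MarkoffRec` whose associated matrices approximate multiples of
`!![1, ξ; ξ, ξ ^ 2]`, the size of the `k`-th matrix being comparable to `X k` and its distance to
the multiples of that matrix to `1 / X k`, with constant `c`. -/
structure MarkoffApprox (ξ : ℝ) (u v w e : ℕ → ℤ) (X : ℕ → ℝ) (c : ℝ) : Prop
    extends MarkoffRec u v w e where
  c_pos : 0 < c
  X_pos : ∀ k, 0 < X k
  abs_u_le : ∀ k, |(u k : ℝ)| ≤ X k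
  abs_v_le : ∀ k, |(v k : ℝ)| ≤ X k
  le_abs_u : ∀ k, X k ≤ c * |(u k : ℝ)|
  approx_u : ∀ k, |(u k : ℝ) * ξ - v k| ≤ c / X k
  approx_v : ∀ k, |(v k : ℝ) * ξ - w k| ≤ c / X k
  strictMono : StrictMono X
  tendsto : Tendsto X atTop atTop

namespace MarkoffApprox

variable {ξ : ℝ} {u v w e : ℕ → ℤ} {X : ℕ → ℝ} {c : ℝ}

theorem u_ne_zero (h : MarkoffApprox ξ u v w e X c) (k : ℕ) : u k ≠ 0 := by
  intro hu
  have := (h.X_pos k).trans_le (h.le_abs_u k)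
  simp [hu] at this

theorem u_cast_ne_zero (h : MarkoffApprox ξ u v w e X c) (k : ℕ) : (u k : ℝ) ≠ 0 :=
  Int.cast_ne_zero.2 (h.u_ne_zero k)

theorem tendsto_u_mul_sub_v (h : MarkoffApprox ξ u v w e X c) :
    Tendsto (fun k => (u k : ℝ) * ξ - v k) atTop (nhds 0) :=
  squeeze_zero_norm h.approx_u (h.tendsto.const_div_atTop c)

theorem tendsto_v_div_u (h : MarkoffApprox ξ u v w e X c) :
    Tendsto (fun k => (v k : ℝ) / u k) atTop (nhds ξ) := by
  have hu : ∀ k, |((u k : ℝ))⁻¹| ≤ 1 := fun k => by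
    rw [abs_inv]
    exact inv_le_one_of_one_le₀ (mod_cast Int.one_le_abs (h.u_ne_zero k))
  have hlim := (bdd_le_mul_tendsto_zero' 1 (.of_forall hu) h.tendsto_u_mul_sub_v).const_sub ξ
  rw [sub_zero] at hlim
  refine hlim.congr fun k => ?_
  have := h.u_cast_ne_zero k
  field_simp
  ring

theorem tendsto_u_mul_u_div_u (h : MarkoffApprox ξ u v w e X c) :
    Tendsto (fun k => (u k * u (k + 1) : ℝ) / u (k + 2)) atTop (nhds (1 / 3)) := by
  have hdiff : Tendsto (fun k => (v (k + 1) : ℝ) / u (k + 1) - v k / u k) atTop (nhds 0) := by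
    simpa using ((tendsto_add_atTop_iff_nat 1).2 h.tendsto_v_div_u).sub h.tendsto_v_div_u
  have hinv := ((h.tendsto_sign_mul hdiff).const_add 3).inv₀ (by norm_num)
  rw [add_zero, ← one_div] at hinv
  refine hinv.congr fun k => ?_
  have := h.u_cast_ne_zero k
  have := h.u_cast_ne_zero (k + 1)
  rw [← inv_div, h.rec_u k]
  push_cast
  field_simp
  ring

theorem exists_X_mul_X_le (h : MarkoffApprox ξ u v w e X c) :
    ∃ B, 0 < B ∧ ∀ k, X k * X (k + 1) ≤ B * X (k + 2) := by
  obtain ⟨B, hB⟩ := h.tendsto_u_mul_u_div_u.abs.bddAbove_range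
  have hc := h.c_pos
  refine ⟨c ^ 2 * max B 1, by positivity, fun k => ?_⟩
  have hu : |(u k : ℝ)| * |(u (k + 1) : ℝ)| ≤ max B 1 * |(u (k + 2) : ℝ)| := by
    rw [← abs_mul, ← div_le_iff₀ (abs_pos.2 (h.u_cast_ne_zero _)), ← abs_div]
    exact (hB ⟨k, rfl⟩).trans (le_max_left B 1)
  calc X k * X (k + 1) ≤ (c * |(u k : ℝ)|) * (c * |(u (k + 1) : ℝ)|) := by
        gcongr
        exacts [(h.X_pos _).le, h.le_abs_u k, h.le_abs_u (k + 1)]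
    _ = c ^ 2 * (|(u k : ℝ)| * |(u (k + 1) : ℝ)|) := by ring
    _ ≤ c ^ 2 * (max B 1 * X (k + 2)) := by
        exact mul_le_mul_of_nonneg_left
          (hu.trans (mul_le_mul_of_nonneg_left (h.abs_u_le _) (by positivity))) (by positivity)
    _ = c ^ 2 * max B 1 * X (k + 2) := by ring

theorem tendsto_sign_mul_u_mul_sub_v (h : MarkoffApprox ξ u v w e X c) :
    Tendsto (fun k => e k * (u k * (u k * ξ - v k)) : ℕ → ℝ) atTop (nhds (-1 / 3)) := by
  rw [← tendsto_add_atTop_iff_nat 1]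
  have hbdd : ∀ k, |(u (k + 1) * (u (k + 2) * ξ - v (k + 2)) : ℝ)| ≤ c := fun k => by
    have := h.X_pos (k + 2)
    calc |(u (k + 1) * (u (k + 2) * ξ - v (k + 2)) : ℝ)| ≤ X (k + 2) * (c / X (k + 2)) := by
          rw [abs_mul]
          gcongr
          exacts [(h.abs_u_le _).trans (h.strictMono.monotone (by omega)), h.approx_u _]
      _ = c := mul_div_cancel₀ c this.ne'
  have hsq := (((tendsto_add_atTop_iff_nat 2).2 h.tendsto_u_mul_sub_v).pow 2).const_add 1
  have hlim := (bdd_le_mul_tendsto_zero' c (.of_forall hbdd) h.tendsto_u_mul_sub_v).sub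
    (h.tendsto_u_mul_u_div_u.mul hsq)
  rw [show (0 - 1 / 3 * (1 + 0 ^ 2) : ℝ) = -1 / 3 by norm_num] at hlim
  refine hlim.congr fun k => ?_
  have hu := h.u_cast_ne_zero (k + 2)
  rw [h.sign_succ]
  push_cast
  field_simp
  linear_combination u (k + 2) * u (k + 1) * h.u_mul_sub_v_mul ξ k
    - u (k + 1) * u k * h.u_mul_v_mul_sub_w ξ (k + 2)

theorem tendsto_sign_mul_u_mul_sub_w (h : MarkoffApprox ξ u v w e X c) :
    Tendsto (fun k => e k * (u k * (v k * ξ - w k) + 1) : ℕ → ℝ) atTop (nhds (-ξ / 3)) := by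
  have hsq := h.tendsto_sign_mul (by simpa using h.tendsto_u_mul_sub_v.pow 2)
  have hlim := (h.tendsto_sign_mul_u_mul_sub_v.const_mul ξ).sub hsq
  rw [show ξ * (-1 / 3) - 0 = -ξ / 3 by ring] at hlim
  refine hlim.congr fun k => ?_
  rw [h.u_mul_v_mul_sub_w]
  ring

theorem tendsto_remainder (h : MarkoffApprox ξ u v w e X c) :
    Tendsto (fun m => e m * (u (m + 1) *
      (3 * u m * (v (m + 3) * (v (m + 4) * ξ - w (m + 4)) + e m * (v (m + 2) * ξ - w (m + 2)))
      - (v m * (v (m + 2) * ξ - w (m + 2)) - e m * (v (m + 1) * ξ - w (m + 1))))) : ℕ → ℝ)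
      atTop (nhds (-2)) := by
  set T : ℕ → ℝ := fun k => u k * u (k + 1) / u (k + 2)
  set ρ : ℕ → ℝ := fun k => v k / u k
  set β : ℕ → ℝ := fun k => e k * (u k * (v k * ξ - w k) + 1)
  have shift {f : ℕ → ℝ} {y : ℝ} (n : ℕ) (hf : Tendsto f atTop (nhds y)) :
      Tendsto (fun k => f (k + n)) atTop (nhds y) := (tendsto_add_atTop_iff_nat n).2 hf
  have limT : Tendsto T atTop (nhds (1 / 3)) := h.tendsto_u_mul_u_div_u
  have limρ : Tendsto ρ atTop (nhds ξ) := h.tendsto_v_div_u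
  have limβ : Tendsto β atTop (nhds (-ξ / 3)) := h.tendsto_sign_mul_u_mul_sub_w
  have limρT := (shift 3 limρ).mul (shift 2 limT)
  have main := (limT.mul (((limρT.mul (shift 4 limβ)).const_mul 3).sub
    (limρ.mul (shift 2 limβ)))).sub ((limT.const_mul 3).const_add 1)
  have osc := ((limT.mul (limρ.sub (limρT.const_mul 3))).add
    ((limT.const_mul 3).mul (shift 2 limβ))).sub (shift 1 limβ)
  rw [show 1 / 3 * (3 * (ξ * (1 / 3) * (-ξ / 3)) - ξ * (-ξ / 3)) - (1 + 3 * (1 / 3)) = (-2 : ℝ) by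
    ring] at main
  rw [show 1 / 3 * (ξ - 3 * (ξ * (1 / 3))) + 3 * (1 / 3) * (-ξ / 3) - -ξ / 3 = 0 by ring] at osc
  have hlim := main.add (h.tendsto_sign_mul osc)
  rw [add_zero] at hlim
  refine hlim.congr fun m => (h.remainder_eq (T := T) (ρ := ρ) (fun k => ?_) (fun k => ?_)
    (fun _ => rfl) m).symm
  · exact (div_mul_cancel₀ _ (h.u_cast_ne_zero _)).symm
  · exact (div_mul_cancel₀ _ (h.u_cast_ne_zero _)).symm

theorem eventually_two_mul_le (h : MarkoffApprox ξ u v w e X c) :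
    ∀ᶠ k in atTop, 2 * X k ≤ X (k + 3) := by
  obtain ⟨B, hB, hX⟩ := h.exists_X_mul_X_le
  filter_upwards [h.tendsto.eventually_ge_atTop (2 * B)] with k hk
  refine le_of_mul_le_mul_left ?_ hB
  calc B * (2 * X k) = 2 * B * X k := by ring
    _ ≤ X (k + 1) * X (k + 2) := by
      gcongr
      exacts [(h.X_pos k).le, (h.X_pos _).le, hk.trans (h.strictMono.monotone (by omega)),
        h.strictMono.monotone (by omega)]
    _ ≤ B * X (k + 3) := hX (k + 1)

theorem eventually_mul_sq_le (h : MarkoffApprox ξ u v w e X c) (K : ℝ) :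
    ∀ᶠ m in atTop, K * X (m + 1) ^ 2 ≤ X (m + 5) := by
  obtain ⟨B, hB, hX⟩ := h.exists_X_mul_X_le
  filter_upwards [h.tendsto.eventually_ge_atTop (K * B ^ 2)] with m hm
  have hpos := h.X_pos
  have hmono := h.strictMono.monotone
  refine le_of_mul_le_mul_left ?_ (pow_pos hB 2)
  calc B ^ 2 * (K * X (m + 1) ^ 2) = K * B ^ 2 * (X (m + 1) * X (m + 1)) := by ring
    _ ≤ X (m + 2) * (X (m + 3) * X (m + 3)) := by
      have := hpos (m + 1)
      have := hpos (m + 2)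
      have := hpos (m + 3)
      gcongr
      exacts [hm.trans (hmono (by omega)), hmono (by omega), hmono (by omega)]
    _ = X (m + 2) * X (m + 3) * X (m + 3) := by ring
    _ ≤ B * X (m + 4) * X (m + 3) := mul_le_mul_of_nonneg_right (hX (m + 2)) (hpos _).le
    _ = B * (X (m + 3) * X (m + 4)) := by ring
    _ ≤ B * (B * X (m + 5)) := mul_le_mul_of_nonneg_left (hX (m + 3)) hB.le
    _ = B ^ 2 * X (m + 5) := by ring

theorem exists_abs_v_mul_le (h : MarkoffApprox ξ u v w e X c) :
    ∃ B, 0 < B ∧ ∀ k, |(v k * (v (k + 2) * ξ - w (k + 2)) : ℝ)| ≤ B / X (k + 1) ∧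
      |(v (k + 1) * (v (k + 2) * ξ - w (k + 2)) : ℝ)| ≤ B / X k := by
  obtain ⟨B, hB, hX⟩ := h.exists_X_mul_X_le
  have hc := h.c_pos
  have hle (i k : ℕ) : |(v i * (v k * ξ - w k) : ℝ)| ≤ X i * c / X k := by
    rw [abs_mul, mul_div_assoc]
    gcongr
    exacts [(h.X_pos i).le, h.abs_v_le i, h.approx_v k]
  refine ⟨c * B, by positivity, fun k => ⟨(hle _ _).trans ?_, (hle _ _).trans ?_⟩⟩
  · rw [div_le_div_iff₀ (h.X_pos _) (h.X_pos _)]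
    linarith [mul_le_mul_of_nonneg_left (hX k) hc.le]
  · rw [div_le_div_iff₀ (h.X_pos _) (h.X_pos _)]
    linarith [mul_le_mul_of_nonneg_left (hX k) hc.le]

theorem abs_sign_mul_le (h : MarkoffApprox ξ u v w e X c) (i k : ℕ) :
    |(e i * (v k * ξ - w k) : ℝ)| ≤ c / X k := by
  rw [abs_mul, h.abs_sign, one_mul]
  exact h.approx_v k

theorem exists_near_w_add (h : MarkoffApprox ξ u v w e X c) :
    ∃ C, 0 < C ∧ ∀ᶠ l in atTop, ∀ j, ∃ A : ℤ,
      |w (l + 3 * j) * ξ - (-1) ^ j * (w l * ξ) - A| ≤ C / X l := by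
  obtain ⟨B, hB, hvb⟩ := h.exists_abs_v_mul_le
  have hc := h.c_pos
  refine ⟨2 * (3 * (B + c)), by positivity, ?_⟩
  filter_upwards [eventually_forall_ge_atTop.2 h.eventually_two_mul_le] with l hl j
  have hstep (k : ℕ) :
      ∃ A : ℤ, |w (k + 3) * ξ + w k * ξ - A| ≤ 3 * (B + c) / X k := by
    refine ⟨_, (congrArg abs (h.w_add_three_mul_add ξ k)).trans_le ?_⟩
    rw [abs_mul, abs_of_pos three_pos, mul_div_assoc, add_div]
    gcongr
    exact (abs_add_le _ _).trans (add_le_add (hvb k).2 (h.abs_sign_mul_le k k))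
  have hdecay (i : ℕ) :
      2 * (3 * (B + c) / X (l + 3 * (i + 1))) ≤ 3 * (B + c) / X (l + 3 * i) := by
    have := mul_le_mul_of_nonneg_left (hl (l + 3 * i) (by omega)) (by positivity : 0 ≤ 3 * (B + c))
    rw [← mul_div_assoc, div_le_div_iff₀ (h.X_pos _) (h.X_pos _), mul_add_one, ← add_assoc]
    linarith
  obtain ⟨A, hA⟩ := exists_int_abs_sub_neg_one_pow_mul_le
    (y := fun i => w (l + 3 * i) * ξ) (fun i => hstep (l + 3 * i)) hdecay j
  exact ⟨A, hA.trans_eq (mul_div_assoc _ _ _).symm⟩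

theorem exists_near_u_mul_w_add_two (h : MarkoffApprox ξ u v w e X c) :
    ∃ C, 0 < C ∧ ∀ m,
      |u m * (w (m + 2) * ξ) - (v m * w (m + 2) - e m * w (m + 1) : ℤ)| ≤ C / X (m + 1) := by
  obtain ⟨B, hB, hvb⟩ := h.exists_abs_v_mul_le
  have hc := h.c_pos
  refine ⟨B + c, by positivity, fun m => ?_⟩
  rw [h.u_mul_w_add_two_mul, add_div]
  exact (abs_sub _ _).trans (add_le_add (hvb m).1 (h.abs_sign_mul_le m (m + 1)))

theorem exists_near_u_mul_w_add_five (h : MarkoffApprox ξ u v w e X c) :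
    ∃ C, 0 < C ∧ ∀ᶠ m in atTop, ∃ N : ℤ, Int.gcd (u m) N ∣ 2 ∧
      |u m * (w (m + 5) * ξ) - N| ≤ C / X (m + 1) ∧
      3 / 2 / X (m + 1) ≤ |u m * (w (m + 5) * ξ) - N| := by
  have hc := h.c_pos
  have hlim := h.tendsto_remainder.abs
  rw [abs_neg, abs_two] at hlim
  refine ⟨5 / 2 * c, by positivity, ?_⟩
  filter_upwards [eventually_ge_atTop 1, hlim.eventually_const_le (u := 3 / 2) (by norm_num),
    hlim.eventually_le_const (u := 5 / 2) (by norm_num)] with m hm hge hle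
  have hX := h.X_pos (m + 1)
  rw [← h.u_mul_w_add_five_mul, abs_mul, h.abs_sign, one_mul, abs_mul] at hge hle
  refine ⟨-(v m * w (m + 2) - e m * w (m + 1))
    + u m * (3 * (v (m + 3) * w (m + 4) + e m * w (m + 2))), ?_, (le_div_iff₀ hX).2 ?_,
    (div_le_iff₀ hX).2 ?_⟩
  · rw [Int.gcd_add_mul_left_right, Int.gcd_neg]
    obtain ⟨m, rfl⟩ := Nat.exists_eq_add_of_le' hm
    exact h.gcd_u_dvd_two m
  · rw [mul_comm]
    refine (mul_le_mul_of_nonneg_right (h.le_abs_u _) (abs_nonneg _)).trans ?_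
    linarith [mul_le_mul_of_nonneg_left hle hc.le]
  · rw [mul_comm]
    exact hge.trans (mul_le_mul_of_nonneg_right (h.abs_u_le _) (abs_nonneg _))

/- `N` is `±` the numerator for `j = 0`, up to a multiple of `u m`; for `1 ≤ j` the remainder is
determined up to a negligible error by its value at `j = 1`. -/
theorem exists_near_u_mul_w (h : MarkoffApprox ξ u v w e X c) :
    ∃ C, 0 < C ∧ ∀ᶠ m in atTop, ∀ j, ∃ N : ℤ, Int.gcd (u m) N ∣ 2 ∧
      |u m * (w (m + 2 + 3 * j) * ξ) - N| ≤ C / X (m + 1) ∧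
      (1 ≤ j → 1 / X (m + 1) ≤ |u m * (w (m + 2 + 3 * j) * ξ) - N|) := by
  obtain ⟨C₂, hC₂, near₂⟩ := h.exists_near_u_mul_w_add_two
  obtain ⟨C₅, hC₅, near₅⟩ := h.exists_near_u_mul_w_add_five
  obtain ⟨C, _, near⟩ := h.exists_near_w_add
  refine ⟨C₂ + C₅ + 1 / 2, by positivity, ?_⟩
  filter_upwards [eventually_ge_atTop 1, near₅, (tendsto_add_atTop_nat 5).eventually near,
    h.eventually_mul_sq_le (2 * C)] with m hm hm₅ hmC hsq j
  have hX := h.X_pos (m + 1)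
  obtain - | j := j
  · refine ⟨_, ?_, (near₂ m).trans ?_, by simp⟩
    · obtain ⟨m, rfl⟩ := Nat.exists_eq_add_of_le' hm
      exact h.gcd_u_dvd_two m
    · gcongr
      linarith
  obtain ⟨N, hgcd, hle, hge⟩ := hm₅
  obtain ⟨A, hA⟩ := hmC j
  have herr : |u m * (w (m + 5 + 3 * j) * ξ - (-1) ^ j * (w (m + 5) * ξ) - A)|
      ≤ 1 / 2 / X (m + 1) := by
    rw [abs_mul, le_div_iff₀ hX]
    have hX₅ := h.X_pos (m + 5)
    calc |(u m : ℝ)| * |w (m + 5 + 3 * j) * ξ - (-1) ^ j * (w (m + 5) * ξ) - A| * X (m + 1)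
        ≤ X (m + 1) * (C / X (m + 5)) * X (m + 1) := by
          gcongr
          exact (h.abs_u_le m).trans (h.strictMono.monotone (by omega))
      _ = C * X (m + 1) ^ 2 / X (m + 5) := by ring
      _ ≤ 1 / 2 := by
          rw [div_le_iff₀ hX₅]
          linarith
  obtain ⟨N', hN', hdiff⟩ := exists_gcd_eq_abs_abs_sub_le N j herr
  obtain ⟨hlow, hup⟩ := abs_le.1 hdiff
  have htwo : 3 / 2 / X (m + 1) = 1 / X (m + 1) + 1 / 2 / X (m + 1) := by ring
  rw [show m + 2 + 3 * (j + 1) = m + 5 + 3 * j by ring]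
  refine ⟨N', hN' ▸ hgcd, ?_, fun _ => by linarith⟩
  rw [add_div, add_div]
  linarith [div_pos hC₂ hX]

theorem exists_dichotomy_w (h : MarkoffApprox ξ u v w e X c) :
    ∃ C, 0 < C ∧ ∀ᶠ m in atTop, ∀ j (p n : ℤ), p ≠ 0 → C * |(p : ℝ)| ≤ X (m + 1) →
      1 / (2 * X m) ≤ |p * (w (m + 2 + 3 * j) * ξ) - n| ∨
      X m ≤ C * |(p : ℝ)| ∧
        (1 ≤ j → 1 / (2 * X (m + 1)) ≤ |p * (w (m + 2 + 3 * j) * ξ) - n|) := by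
  obtain ⟨C, hC, near⟩ := h.exists_near_u_mul_w
  have hc := h.c_pos
  refine ⟨2 * C + 2 * c, by positivity, near.mono fun m hm j p n hp hpX => ?_⟩
  obtain ⟨N, hgcd, hle, hge⟩ := hm j
  set θ := w (m + 2 + 3 * j) * ξ
  have hX := h.X_pos m
  have hX₁ := h.X_pos (m + 1)
  have hgcd₂ : (Int.gcd (u m) N : ℝ) ≤ 2 := mod_cast Nat.le_of_dvd two_pos hgcd
  have hp₀ := abs_nonneg (p : ℝ)
  rcases one_sub_le_or_le_gcd_mul (N := N) (n := n) (h.u_ne_zero m) hp θ with hlow | ⟨hup, hlow⟩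
  · left
    have hhalf : |p * (u m * θ - N)| ≤ 1 / 2 :=
      calc |p * (u m * θ - N)| ≤ |(p : ℝ)| * (C / X (m + 1)) := by
            rw [abs_mul]
            gcongr
        _ = C * |(p : ℝ)| / X (m + 1) := by ring
        _ ≤ 1 / 2 := by
            rw [div_le_iff₀ hX₁]
            linarith [mul_nonneg hc.le hp₀]
    have := mul_le_mul_of_nonneg_right (h.abs_u_le m) (abs_nonneg (p * θ - n))
    rw [div_le_iff₀ (by positivity)]
    linarith
  · refine .inr ⟨?_, fun hj => ?_⟩
    · calc X m ≤ c * |(u m : ℝ)| := h.le_abs_u m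
        _ ≤ c * (2 * |(p : ℝ)|) := by
          gcongr
          exact hup.trans (by gcongr)
        _ ≤ (2 * C + 2 * c) * |(p : ℝ)| := by linarith [mul_nonneg hC.le hp₀]
    · have : 1 / X (m + 1) ≤ 2 * |p * θ - n| := (hge hj).trans (hlow.trans (by gcongr))
      rw [div_le_iff₀ hX₁] at this
      rw [div_le_iff₀ (by positivity)]
      linarith

theorem exists_abs_u_mul_aeval_sub_le (h : MarkoffApprox ξ u v w e X c) :
    ∃ D, 0 < D ∧ ∀ (R : Polynomial ℤ) (k : ℕ), R.natDegree ≤ 3 →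
      |u k * Polynomial.aeval ξ R - (R.coeff 3 * (w k * ξ)
        + (R.coeff 2 * w k + R.coeff 1 * v k + R.coeff 0 * u k : ℤ))| ≤ D * polyNorm R / X k := by
  have hc := h.c_pos
  refine ⟨c * ((|ξ| + 1) ^ 2 + 1), by positivity, fun R k hR => ?_⟩
  have ha := h.approx_u k
  have hb := h.approx_v k
  have : 0 ≤ c / X k := (abs_nonneg _).trans ha
  set a : ℝ := u k * ξ - v k with ha_def
  set b : ℝ := v k * ξ - w k with hb_def
  have hsplit : u k * Polynomial.aeval ξ R - (R.coeff 3 * (w k * ξ)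
        + (R.coeff 2 * w k + R.coeff 1 * v k + R.coeff 0 * u k : ℤ)) =
      R.coeff 3 * (ξ * (ξ * a + b)) + R.coeff 2 * (ξ * a + b) + R.coeff 1 * a := by
    rw [Polynomial.aeval_eq_sum_range' (Nat.lt_succ_of_le hR)]
    simp only [Finset.sum_range_succ, Finset.sum_range_zero, zsmul_eq_mul, ha_def, hb_def]
    push_cast
    ring
  have hab : |ξ * a + b| ≤ |ξ| * (c / X k) + c / X k := by
    refine (abs_add_le _ _).trans (add_le_add ?_ hb)
    rw [abs_mul]
    gcongr
  have hcoeff {i : ℕ} {y B : ℝ} (hy : |y| ≤ B) : |R.coeff i * y| ≤ polyNorm R * B := by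
    rw [abs_mul]
    exact mul_le_mul (abs_coeff_le_polyNorm R i) hy (abs_nonneg y) (Nat.cast_nonneg _)
  rw [hsplit]
  calc |R.coeff 3 * (ξ * (ξ * a + b)) + R.coeff 2 * (ξ * a + b) + R.coeff 1 * a|
      ≤ polyNorm R * (|ξ| * (|ξ| * (c / X k) + c / X k))
          + polyNorm R * (|ξ| * (c / X k) + c / X k) + polyNorm R * (c / X k) := by
        refine (abs_add_three _ _ _).trans
          (add_le_add_three (hcoeff ?_) (hcoeff hab) (hcoeff ha))
        rw [abs_mul]
        gcongr
    _ = c * ((|ξ| + 1) ^ 2 + 1) * polyNorm R / X k := by ring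

theorem exists_int_abs_u_mul_aeval_sub_ge (h : MarkoffApprox ξ u v w e X c) :
    ∃ D, 0 < D ∧ ∀ (R : Polynomial ℤ) (k : ℕ) (n : ℤ), R.natDegree ≤ 3 →
      ∃ n' : ℤ, ∀ Y, 0 < Y → D * polyNorm R * Y ≤ X k →
        1 / (2 * Y) ≤ |R.coeff 3 * (w k * ξ) - n'| →
        1 / (4 * Y) ≤ |u k * Polynomial.aeval ξ R - n| := by
  obtain ⟨D, hD, lin⟩ := h.exists_abs_u_mul_aeval_sub_le
  refine ⟨4 * D, by positivity, fun R k n hR =>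
    ⟨n - (R.coeff 2 * w k + R.coeff 1 * v k + R.coeff 0 * u k), fun Y hY hYX hlow => ?_⟩⟩
  have herr : D * polyNorm R / X k ≤ 1 / (4 * Y) := by
    rw [div_le_div_iff₀ (h.X_pos k) (by positivity)]
    linarith
  have htri := abs_sub_abs_le_abs_sub
    (R.coeff 3 * (w k * ξ) - (n - (R.coeff 2 * w k + R.coeff 1 * v k + R.coeff 0 * u k) : ℤ))
    (u k * Polynomial.aeval ξ R - n)
  have hlin := lin R k hR
  rw [abs_sub_comm] at hlin
  have hsub : R.coeff 3 * (w k * ξ)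
        - (n - (R.coeff 2 * w k + R.coeff 1 * v k + R.coeff 0 * u k) : ℤ)
        - (u k * Polynomial.aeval ξ R - n) =
      R.coeff 3 * (w k * ξ) + (R.coeff 2 * w k + R.coeff 1 * v k + R.coeff 0 * u k : ℤ)
        - u k * Polynomial.aeval ξ R := by
    push_cast
    ring
  rw [hsub] at htri
  have hhalf : 1 / (2 * Y) = 1 / (4 * Y) + 1 / (4 * Y) := by ring
  linarith

theorem exists_dichotomy (h : MarkoffApprox ξ u v w e X c) :
    ∃ C, 0 < C ∧ ∀ᶠ m in atTop, ∀ j (R : Polynomial ℤ) (n : ℤ), R.natDegree = 3 →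
      C * polyNorm R ≤ X (m + 1) →
      1 / (4 * X m) ≤ |u (m + 2 + 3 * j) * Polynomial.aeval ξ R - n| ∨
      X m ≤ C * polyNorm R ∧
        (1 ≤ j → 1 / (4 * X (m + 1)) ≤ |u (m + 2 + 3 * j) * Polynomial.aeval ξ R - n|) := by
  obtain ⟨C, hC, dich⟩ := h.exists_dichotomy_w
  obtain ⟨D, hD, lin⟩ := h.exists_int_abs_u_mul_aeval_sub_ge
  obtain ⟨B, hB, hX⟩ := h.exists_X_mul_X_le
  refine ⟨C + D * B + 1, by positivity, ?_⟩
  filter_upwards [dich, h.eventually_mul_sq_le D] with m hm hsq j R n hR hRX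
  set H : ℝ := (polyNorm R : ℝ)
  have : 0 ≤ H := Nat.cast_nonneg _
  have hlead : R.coeff 3 ≠ 0 := Polynomial.coeff_ne_zero_of_eq_degree
    ((Polynomial.degree_eq_iff_natDegree_eq_of_pos three_pos).2 hR)
  have hCp := mul_le_mul_of_nonneg_left (abs_coeff_le_polyNorm R 3) hC.le
  have hCH : 0 ≤ C * H := by positivity
  have hDBH : 0 ≤ D * B * H := by positivity
  obtain ⟨n', hn'⟩ := lin R _ n hR.le
  refine (hm j (R.coeff 3) n' hlead (by linarith)).imp (hn' _ (h.X_pos m) ?_) fun hup =>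
    ⟨by linarith [hup.1], fun hj => hn' _ (h.X_pos (m + 1)) ?_ (hup.2 hj)⟩
  · refine le_of_mul_le_mul_left ?_ hB
    calc B * (D * H * X m) = X m * (D * B * H) := by ring
      _ ≤ X m * X (m + 1) := mul_le_mul_of_nonneg_left (by linarith) (h.X_pos m).le
      _ ≤ B * X (m + 2) := hX m
      _ ≤ B * X (m + 2 + 3 * j) :=
        mul_le_mul_of_nonneg_left (h.strictMono.monotone (by omega)) hB.le
  · calc D * H * X (m + 1) ≤ D * X (m + 1) * X (m + 1) := by
          have := h.X_pos (m + 1)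
          gcongr
          linarith
      _ = D * X (m + 1) ^ 2 := by ring
      _ ≤ X (m + 5) := hsq
      _ ≤ X (m + 2 + 3 * j) := h.strictMono.monotone (by omega)

theorem exists_lower_bound (h : MarkoffApprox ξ u v w e X c) {b g : ℝ} (hb : 0 < b) (hg : 0 ≤ g)
    (hX : ∀ k, X (k + 1) ≤ b * X k ^ g) :
    ∃ K, 0 < K ∧ ∀ (R : Polynomial ℤ) (n : ℤ) (k : ℕ), R.natDegree = 3 →
      K * (polyNorm R : ℝ) ^ g ^ 2 < X k →
      1 / (4 * (K * (polyNorm R : ℝ) ^ g ^ 2)) ≤ |u k * Polynomial.aeval ξ R - n| := by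
  obtain ⟨C, hC, dich⟩ := h.exists_dichotomy
  obtain ⟨m₀, hm₀⟩ := eventually_atTop.1 dich
  obtain ⟨K, hK, index⟩ :=
    exists_index_of_le_mul_rpow h.X_pos h.strictMono h.tendsto hb hg hX hC m₀
  refine ⟨K + b * b ^ g * C ^ g ^ 2, by positivity, fun R n k hR hk => ?_⟩
  have hR₀ : R ≠ 0 := by
    rintro rfl
    simp at hR
  have hH := one_le_polyNorm hR₀
  set H : ℝ := (polyNorm R : ℝ)
  have hH_pow : 0 < H ^ g ^ 2 := by positivity
  rw [add_mul] at hk ⊢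
  have hbC : 0 ≤ b * b ^ g * C ^ g ^ 2 * H ^ g ^ 2 := by positivity
  have hKH : 0 < K * H ^ g ^ 2 := by positivity
  have weaken {i : ℕ} (hi : X i ≤ K * H ^ g ^ 2 + b * b ^ g * C ^ g ^ 2 * H ^ g ^ 2) :
      1 / (4 * (K * H ^ g ^ 2 + b * b ^ g * C ^ g ^ 2 * H ^ g ^ 2)) ≤ 1 / (4 * X i) := by
    have := h.X_pos i
    gcongr
  obtain ⟨m, j, rfl, hm, hCX, hXm⟩ := index H hH k (by linarith)
  rcases hm₀ m hm j R n hR hCX with hlow | ⟨hXC, hlow⟩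
  · exact (weaken (by linarith)).trans hlow
  have hX₂ : X (m + 2) ≤ K * H ^ g ^ 2 + b * b ^ g * C ^ g ^ 2 * H ^ g ^ 2 := by
    have := le_mul_rpow_sq_of_le_mul_rpow h.X_pos hb hg hX hXC
    rw [Real.mul_rpow hC.le (by positivity), ← mul_assoc] at this
    linarith
  have hj : 1 ≤ j := by
    by_contra! hj
    obtain rfl : j = 0 := by omega
    exact hk.not_ge hX₂
  exact (weaken ((h.strictMono.monotone (by omega)).trans hX₂)).trans (hlow hj)

end MarkoffApprox

namespace MarkoffSeq

variable {ξ : ℝ} {x : ℕ → Matrix (Fin 2) (Fin 2) ℤ}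

theorem markoffRec (hx : MarkoffSeq ξ x) :
    MarkoffRec (fun k => x (k + 1) 0 0) (fun k => x (k + 1) 0 1) (fun k => x (k + 1) 1 1)
      (fun k => (-1) ^ (k + 1)) := by
  obtain ⟨hsymm, hdet, c₁, c₂, c₃, -, -, -, hk⟩ := hx
  replace hsymm (k : ℕ) : x (k + 1) 1 0 = x (k + 1) 0 1 := (hsymm (k + 1) (by omega)).symm
  have hentry (k : ℕ) (i j) :
      x (k + 2 + 1) i j = (x (k + 1) * Mmat (k + 1) * x (k + 1 + 1)) i j := by
    rw [← (hk (k + 1) (by omega)).2.2.1.2]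
  simp only [Mmat, Matrix.mul_apply, Fin.sum_univ_two, Matrix.of_apply, Matrix.cons_val_zero,
    Matrix.cons_val_one, Matrix.cons_val', Matrix.cons_val_fin_one, mul_zero, add_zero] at hentry
  refine ⟨fun k => ?_, fun k => by ring, fun k => ?_, fun k => ?_, fun k => ?_, fun k => ?_,
    fun k => ?_⟩
  · rw [← mul_pow]; simp
  · have := hdet (k + 1) (by omega)
    rwa [Matrix.det_fin_two, hsymm] at this
  · rw [hentry, hsymm]; ring
  · rw [hentry]; ring
  · rw [← hsymm (k + 2), hentry, hsymm, hsymm]; ring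
  · rw [hentry, hsymm]; ring

theorem strictMono_Xnorm (hx : MarkoffSeq ξ x) : StrictMono fun k => Xnorm x (k + 1) := by
  obtain ⟨-, -, c₁, c₂, c₃, -, -, -, hk⟩ := hx
  exact strictMono_nat_of_lt_succ fun k => (hk (k + 1) (by omega)).2.2.2.1

theorem tendsto_Xnorm (hx : MarkoffSeq ξ x) :
    Tendsto (fun k => Xnorm x (k + 1)) atTop atTop := by
  have hmono := hx.strictMono_Xnorm
  simp only [Xnorm_eq_natCast] at hmono ⊢
  exact tendsto_natCast_atTop_atTop.comp
    (StrictMono.tendsto_atTop fun a b hab => Nat.cast_lt.1 (hmono hab))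

theorem exists_markoffApprox (hx : MarkoffSeq ξ x) :
    ∃ c, MarkoffApprox ξ (fun k => x (k + 1) 0 0) (fun k => x (k + 1) 0 1)
      (fun k => x (k + 1) 1 1) (fun k => (-1) ^ (k + 1)) (fun k => Xnorm x (k + 1)) c := by
  have hrec := hx.markoffRec
  have hmono := hx.strictMono_Xnorm
  have htop := hx.tendsto_Xnorm
  obtain ⟨-, -, c₁, c₂, c₃, -, -, hc₃, hk⟩ := hx
  replace hk (k : ℕ) := hk (k + 1) (by omega)
  have happrox (k : ℕ) : c₃ / Xnorm x (k + 1) ≤ (1 + ξ ^ 2 + c₃) / Xnorm x (k + 1) :=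
    div_le_div_of_nonneg_right (le_add_of_nonneg_left (by positivity)) (Xnorm_nonneg x _)
  refine ⟨1 + ξ ^ 2 + c₃, { hrec with
    c_pos := by positivity
    X_pos := fun k => ?_
    abs_u_le := fun k => le_max_left _ _
    abs_v_le := fun k => le_max_of_le_right (le_max_left _ _)
    le_abs_u := fun k => (hk k).2.2.2.2.le.trans ?_
    approx_u := fun k => (hk k).2.1.1.trans (happrox k)
    approx_v := fun k => (hk k).2.1.2.trans (happrox k)
    strictMono := hmono
    tendsto := htop }⟩
  · exact pos_of_mul_pos_right ((Xnorm_nonneg x _).trans_lt (hk k).2.2.2.2) (by positivity)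
      |>.trans_le (le_max_left _ _)
  · exact mul_le_mul_of_nonneg_right (le_add_of_nonneg_right hc₃.le) (abs_nonneg _)

end MarkoffSeq

theorem stmt15 (ξ : ℝ) (x : ℕ → Matrix (Fin 2) (Fin 2) ℤ) (hx : MarkoffSeq ξ x) :
    ∃ c₄ c₅ : ℝ, 0 < c₄ ∧ 0 < c₅ ∧
      ∀ R : Polynomial ℤ, R.natDegree = 3 → ∀ k, 1 ≤ k →
        Xnorm x k > c₄ * (polyNorm R : ℝ) ^ (gold^2) →
        distInt ((x k 0 0 : ℝ) * Polynomial.aeval ξ R)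
          ≥ c₅ * (polyNorm R : ℝ) ^ (-(gold^2)) := by
  obtain ⟨c, happrox⟩ := hx.exists_markoffApprox
  obtain ⟨-, -, c₁, c₂, c₃, -, hc₂, -, hk⟩ := hx
  obtain ⟨K, hK, hbound⟩ := happrox.exists_lower_bound hc₂ Real.goldenRatio_pos.le
    fun k => (hk (k + 1) (by omega)).1.2
  refine ⟨K, 1 / (4 * K), hK, by positivity, fun R hR k hk₁ hlt => ?_⟩
  obtain ⟨k, rfl⟩ := Nat.exists_eq_add_of_le' hk₁
  calc 1 / (4 * K) * (polyNorm R : ℝ) ^ (-(gold^2))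
      = 1 / (4 * (K * (polyNorm R : ℝ) ^ (gold^2))) := by
        rw [Real.rpow_neg (Nat.cast_nonneg _)]
        ring
    _ ≤ distInt ((x (k + 1) 0 0 : ℝ) * Polynomial.aeval ξ R) := hbound R _ k hR hlt
end

section
/- There exists a constant c > 0 such that for every integer k ≥ 1: (i) there exists an integer n with |x_{k,0}·x_{k+1,0}·x_{k+2,2}·x_{k+4,2}·ξ² − 8·(−1)^k·x_{k+1,2}·ξ − n| ≤ c/X_{k+1}; (ii) there exists an integer n with |x_{k,0}·x_{k+1,0}·x_{k+2,0}·x_{k+4,0}·ξ⁶ − 20·(−1)^k·x_{k+1,2}·ξ − n| ≤ c/X_{k+1}. -/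
open Polynomial Filter

/-!
Write `a`, `b`, `y`, `w`, `z` for the entries of `x k`, …, `x (k + 4)` and `s = (-1) ^ k`. The
`(0, 0)` entries of three consecutive matrices form a Markoff triple,
`a₀² + b₀² + y₀² = 3 a₀ b₀ y₀`, so `α = a₀ / y₀` satisfies `α b₀ = O(1)`, that is
`α = O(1 / X_{k+1})`. It therefore suffices to compute in the ring of real sequences modulo `𝒪 α`,
where `𝒪` is the subring of bounded sequences.

Everything is expanded in powers of the slope `ρ = y₁ / y₀`: the recurrence and `det = 1` express
the entries of `x k`, `x (k + 1)`, `x (k + 2)` through `ρ` and the Markoff triple, and `ξ - ρ` is so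
small that the leading product times `ξⁿ` only produces terms in `ρⁿ`, `ρⁿ⁻¹` and `ρⁿ⁻²`. The
resulting polynomial in `ρ` agrees modulo `𝒪 α` with an integer polynomial in the entries, apart
from a multiple of `s b₀ ρ³ ≡ s b₂ ξ`; the multiple is `8` in the first case and `20` in the second.
-/

/-- An integer approximation to `a₀ * b₀ * y₂ * z₂ * ξ ^ 2 - 8 * s * b₂ * ξ`, where `a`, `b`, `y`,
`z` are the entries of `x k`, `x (k + 1)`, `x (k + 2)`, `x (k + 4)` and `s = (-1) ^ k`. Its
coefficients are found by matching the powers of the slope `y₁ / y₀` in both expansions. -/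
def approxFst {R : Type*} [CommRing R] (s a₂ b₀ b₁ b₂ y₁ y₂ : R) : R :=
  3 * b₀ * y₁ ^ 2 * y₂ ^ 2 + b₁ ^ 2 * y₂ * (3 * b₀ * y₂ - a₂) - 3 * b₀ * y₂ ^ 2
    - 2 * s * b₁ * y₂ ^ 2 - 3 * a₂ * y₂ + 12 * b₂

/-- The analogue of `approxFst` for `a₀ * b₀ * y₀ * z₀ * ξ ^ 6 - 20 * s * b₂ * ξ`. -/
def approxSnd {R : Type*} [CommRing R] (s a₂ b₀ b₁ b₂ y₁ y₂ : R) : R :=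
  3 * b₀ * y₁ ^ 2 * y₂ ^ 2 + b₁ ^ 2 * y₂ * (3 * b₀ * y₂ - a₂) - 6 * b₀ * y₂ ^ 2
    - 4 * s * b₁ * y₂ ^ 2 - 2 * s * b₁ * b₂ ^ 2 - 3 * b₀ * b₂ ^ 2 - 5 * a₂ * y₂ + 30 * b₂

section Congruence

variable {K : Type*} [CommRing K] {𝒪 : Subring K}

@[simp, norm_cast]
lemma subring_coe_ofNat (n : ℕ) [n.AtLeastTwo] : ((ofNat(n) : 𝒪) : K) = ofNat(n) := rfl

lemma smodEq_span_singleton_iff {u v w : K} :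
    u ≡ v [SMOD 𝒪 ∙ w] ↔ ∃ r : 𝒪, u = v + r * w := by
  simp only [SModEq.sub_mem, Submodule.mem_span_singleton, Subring.smul_def, smul_eq_mul,
    sub_eq_iff_eq_add', eq_comm (b := u - v)]

lemma coe_mul_smodEq {u v w : K} (h : u ≡ v [SMOD 𝒪 ∙ w]) (c : 𝒪) :
    c * u ≡ c * v [SMOD 𝒪 ∙ w] :=
  h.smul c

lemma mul_pow_smodEq {p t q w : K} {ξ ρ : 𝒪} (hp : p * ξ ≡ p * ρ + t [SMOD 𝒪 ∙ w])
    (ht : t * ξ ≡ t * ρ + q [SMOD 𝒪 ∙ w]) (hq : q * ξ ≡ q * ρ [SMOD 𝒪 ∙ w]) (n : ℕ) :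
    p * ξ ^ (n + 2) ≡ p * ρ ^ (n + 2) + (n + 2) * t * ρ ^ (n + 1) + (n + 2).choose 2 * q * ρ ^ n
      [SMOD 𝒪 ∙ w] := by
  rw [smodEq_span_singleton_iff] at *
  obtain ⟨r, hp⟩ := hp
  obtain ⟨r', ht⟩ := ht
  obtain ⟨r'', hq⟩ := hq
  induction n with
  | zero =>
    refine ⟨r * ξ + r * ρ + r', ?_⟩
    push_cast [Nat.choose_self]
    linear_combination (ξ + ρ) * hp + ht
  | succ n ih =>
    obtain ⟨r₀, ih⟩ := ih
    refine ⟨r₀ * ξ + ρ ^ (n + 2) * r + (n + 2) * ρ ^ (n + 1) * r'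
      + (n + 2).choose 2 * ρ ^ n * r'', ?_⟩
    have hchoose : ((n + 1 + 2).choose 2 : K) = (n + 2) + (n + 2).choose 2 := by
      rw [Nat.choose_succ_succ' (n + 2) 1, Nat.choose_one_right]
      push_cast
      ring
    push_cast
    linear_combination ξ * ih + ρ ^ (n + 2) * hp + (n + 2) * ρ ^ (n + 1) * ht
      + (n + 2).choose 2 * ρ ^ n * hq - q * ρ ^ (n + 1) * hchoose

/-- The entries `a`, `b`, `y` of `x k`, `x (k + 1)`, `x (k + 2)`, and the `(0, 0)` entries `w₀`,
`z₀` of `x (k + 3)`, `x (k + 4)`, written in terms of `y₀` and elements of a subring `𝒪`: the ratios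
`α = a₀ / y₀`, `β = b₀ / y₀`, the slope `ρ = y₁ / y₀`, the inverse `ε = 1 / a₀`, the bounded product
`ν = α * b₀` and the sign `s = (-1) ^ k`. In the application `K` is the ring of real sequences and
`𝒪` its subring of bounded sequences. -/
structure SlopeExpansion (s α β ρ ε ν : 𝒪) (a₀ a₂ b₀ b₁ b₂ y₀ y₁ y₂ w₀ z₀ : K) : Prop where
  sign_sq : (s : K) ^ 2 = 1
  markoff : (3 * ν : K) = 1 + α ^ 2 + β ^ 2
  α_mul_b₀ : α * b₀ = ν
  a₀_mul_ε : a₀ * ε = 1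
  a₀_eq : a₀ = α * y₀
  b₀_eq : b₀ = β * y₀
  y₁_eq : y₁ = ρ * y₀
  y₂_eq : y₂ = ρ ^ 2 * y₀ + α * ε
  b₁_eq : b₁ = ρ * b₀ - s * α
  b₂_eq : b₂ = ρ ^ 2 * b₀ + α * (3 - 2 * s * ρ - β * ε)
  a₂_eq : a₂ = ρ ^ 2 * a₀ + 2 * s * β * ρ + 3 * β - α ^ 2 * ε
  w₀_eq : w₀ = 3 * b₀ * y₀ - a₀
  z₀_eq : z₀ = 3 * y₀ * w₀ - b₀

variable {s α β ρ ε ν : 𝒪} {a₀ a₂ b₀ b₁ b₂ y₀ y₁ y₂ w₀ z₀ : K}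

namespace SlopeExpansion

variable (h : SlopeExpansion s α β ρ ε ν a₀ a₂ b₀ b₁ b₂ y₀ y₁ y₂ w₀ z₀)
include h

lemma α_mul_ε_mul_y₀ : α * ε * y₀ = 1 := by
  linear_combination h.a₀_mul_ε - ε * h.a₀_eq

lemma α_mul_ε_mul_b₀ : α * ε * b₀ = β := by
  linear_combination β * h.α_mul_ε_mul_y₀ + α * ε * h.b₀_eq

lemma ε_mul_ν : ε * ν = (β : K) := by
  linear_combination h.α_mul_ε_mul_b₀ - ε * h.α_mul_b₀

lemma ν_mul_y₀ : ν * y₀ = a₀ * b₀ := by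
  linear_combination -y₀ * h.α_mul_b₀ - b₀ * h.a₀_eq

lemma a₀_mul_w₀ : a₀ * w₀ = b₀ ^ 2 + y₀ ^ 2 := by
  rw [h.w₀_eq]
  linear_combination y₀ ^ 2 * h.markoff - 3 * y₀ * h.ν_mul_y₀ - (a₀ + α * y₀) * h.a₀_eq
    - (b₀ + β * y₀) * h.b₀_eq

lemma leading_coeff_eq : a₀ * b₀ * y₀ * z₀ = 3 * b₀ * y₀ ^ 4 + b₀ ^ 2 * y₀ * w₀ := by
  rw [h.z₀_eq]
  linear_combination 3 * b₀ * y₀ ^ 2 * h.a₀_mul_w₀ - b₀ ^ 2 * y₀ * h.w₀_eq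

lemma b₂_smodEq : b₂ ≡ b₀ * ρ ^ 2 [SMOD 𝒪 ∙ (α : K)] :=
  smodEq_span_singleton_iff.2 ⟨3 - 2 * s * ρ - β * ε, by push_cast; linear_combination h.b₂_eq⟩

lemma b₀_mul_y₁_sq_mul_y₂_sq_smodEq :
    3 * b₀ * y₁ ^ 2 * y₂ ^ 2 - 6 * b₀ * y₂ ^ 2 + 9 * b₀ * ρ ^ 2
      ≡ 3 * b₀ * y₀ ^ 4 * ρ ^ 6 [SMOD 𝒪 ∙ (α : K)] := by
  obtain ⟨⟩ := h
  exact smodEq_span_singleton_iff.2 ⟨-6 * β * ε, by push_cast; grind⟩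

lemma b₀_mul_y₂_sq_smodEq :
    b₀ * y₂ ^ 2 ≡ b₀ * y₀ ^ 2 * ρ ^ 4 + 2 * b₀ * ρ ^ 2 [SMOD 𝒪 ∙ (α : K)] := by
  obtain ⟨⟩ := h
  exact smodEq_span_singleton_iff.2 ⟨β * ε, by push_cast; grind⟩

lemma b₁_mul_y₂_sq_smodEq :
    b₁ * y₂ ^ 2 ≡ b₀ * y₀ ^ 2 * ρ ^ 5 + 2 * b₀ * ρ ^ 3 - s * a₀ * y₀ * ρ ^ 4
      [SMOD 𝒪 ∙ (α : K)] := by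
  refine smodEq_span_singleton_iff.2 ⟨β * ε * ρ - 2 * s * ρ ^ 2 - s * α ^ 2 * ε ^ 2, ?_⟩
  push_cast
  rw [h.b₁_eq, h.y₂_eq]
  linear_combination (2 * ρ ^ 3 * b₀ - 2 * s * α * ρ ^ 2) * h.α_mul_ε_mul_y₀
    + ρ * α * ε * h.α_mul_ε_mul_b₀ + s * ρ ^ 4 * y₀ * h.a₀_eq

lemma a₂_mul_y₂_smodEq :
    a₂ * y₂ ≡ a₀ * y₀ * ρ ^ 4 + 2 * s * b₀ * ρ ^ 3 + 3 * b₀ * ρ ^ 2 [SMOD 𝒪 ∙ (α : K)] := by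
  refine smodEq_span_singleton_iff.2 ⟨2 * s * β * ε * ρ + 3 * β * ε - α ^ 2 * ε ^ 2, ?_⟩
  push_cast
  rw [h.a₂_eq, h.y₂_eq]
  linear_combination α * ρ ^ 2 * h.a₀_mul_ε - α * ρ ^ 2 * h.α_mul_ε_mul_y₀
    - (2 * s * ρ ^ 3 + 3 * ρ ^ 2) * h.b₀_eq

lemma b₀_mul_b₂_sq_smodEq :
    b₀ * b₂ ^ 2 ≡ b₀ ^ 3 * ρ ^ 4 - 4 * s * (ν * b₀) * ρ ^ 3 + 2 * b₀ * ρ ^ 2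
      [SMOD 𝒪 ∙ (α : K)] := by
  refine smodEq_span_singleton_iff.2
    ⟨2 * ν * ρ ^ 2 + ν * (3 - 2 * s * ρ - β * ε) ^ 2, ?_⟩
  push_cast
  rw [h.b₂_eq]
  linear_combination (2 * ρ ^ 2 * b₀ * (3 - 2 * s * ρ - β * ε)
    + α * (3 - 2 * s * ρ - β * ε) ^ 2 + 2 * ρ ^ 2 * α) * h.α_mul_b₀
    + 2 * ρ ^ 2 * b₀ * h.markoff - 2 * ρ ^ 2 * b₀ * β * h.ε_mul_ν

lemma b₁_mul_b₂_sq_smodEq :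
    b₁ * b₂ ^ 2 ≡ b₀ ^ 3 * ρ ^ 5 - 5 * s * (ν * b₀) * ρ ^ 4 + 2 * b₀ * ρ ^ 3
      [SMOD 𝒪 ∙ (α : K)] := by
  obtain ⟨⟩ := h
  exact smodEq_span_singleton_iff.2
    ⟨2 * ν * ρ ^ 3 + ν * (3 - 2 * s * ρ - β * ε) ^ 2 * ρ
      - s * (2 * ν * ρ ^ 2 * (3 - 2 * s * ρ - β * ε) + α ^ 2 * (3 - 2 * s * ρ - β * ε) ^ 2),
      by push_cast; grind⟩

lemma b₁_sq_mul_smodEq :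
    b₁ ^ 2 * y₂ * (3 * b₀ * y₂ - a₂) ≡ b₀ ^ 2 * y₀ * w₀ * ρ ^ 6 - 2 * s * b₀ ^ 3 * ρ ^ 5
      + 3 * b₀ ^ 3 * ρ ^ 4 - 2 * s * (a₀ * b₀ * w₀) * ρ ^ 5 + 5 * (ν * b₀) * ρ ^ 4
      + a₀ * y₀ * ρ ^ 4 - 12 * s * (ν * b₀) * ρ ^ 3 + 2 * s * b₀ * ρ ^ 3 [SMOD 𝒪 ∙ (α : K)] := by
  have hb₁ : b₁ ^ 2 = ρ ^ 2 * b₀ ^ 2 - 2 * s * ρ * ν + α ^ 2 := by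
    rw [h.b₁_eq]
    linear_combination α ^ 2 * h.sign_sq - 2 * s * ρ * h.α_mul_b₀
  have hy₂ : y₂ * (3 * b₀ * y₂ - a₂) = y₀ * w₀ * ρ ^ 4 - 2 * s * b₀ * ρ ^ 3 + 3 * b₀ * ρ ^ 2
      + α * ε * (α ^ 2 * ε - 2 * s * β * ρ) := by
    rw [h.y₂_eq, h.a₂_eq, h.w₀_eq]
    grind [h.α_mul_ε_mul_y₀, h.α_mul_ε_mul_b₀, h.b₀_eq, h.a₀_mul_ε]
  have hα : α ^ 2 * y₀ * w₀ = ν * b₀ + a₀ * y₀ := by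
    linear_combination α * h.a₀_mul_w₀ + b₀ * h.α_mul_b₀ - y₀ * h.a₀_eq - α * w₀ * h.a₀_eq
  refine smodEq_span_singleton_iff.2
    ⟨β ^ 2 * ρ ^ 2 + 4 * ν * β * ε * ρ ^ 2 - 2 * s * ν * α ^ 2 * ε ^ 2 * ρ + 3 * ν * ρ ^ 2
      - 2 * s * α * β * (α * ε) * ρ + α ^ 2 * (α * ε) ^ 2, ?_⟩
  push_cast
  rw [mul_assoc, hb₁, hy₂]
  linear_combination
    (α * ρ ^ 2 * (α * ε * b₀ + β) - 2 * s * β * ρ ^ 3 * b₀) * h.α_mul_ε_mul_b₀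
    - 2 * s * ρ ^ 5 * w₀ * h.ν_mul_y₀ + (4 * ρ ^ 4 * ν * b₀ + 4 * ν * β * α * ε * ρ ^ 2) * h.sign_sq
    + ρ ^ 4 * hα + 2 * s * ρ ^ 3 * b₀ * h.markoff + 3 * ρ ^ 2 * α * h.α_mul_b₀

lemma quartic_smodEq :
    (ρ ^ 2 + (α * ε) ^ 2) * (a₀ * b₀ * y₀ * z₀ * ρ ^ 4 - 4 * s * (a₀ * b₀ * w₀) * ρ ^ 3
      + 6 * (ν * b₀) * ρ ^ 2) ≡ a₀ * b₀ * y₀ * z₀ * ρ ^ 6 - 4 * s * (a₀ * b₀ * w₀) * ρ ^ 5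
      + 5 * (ν * b₀) * ρ ^ 4 + 3 * b₀ * y₀ ^ 2 * ρ ^ 4 + 3 * b₀ ^ 3 * ρ ^ 4
      - 12 * s * (ν * b₀) * ρ ^ 3 [SMOD 𝒪 ∙ (α : K)] := by
  obtain ⟨⟩ := h
  exact smodEq_span_singleton_iff.2 ⟨4 * s * ν * ρ ^ 3 + 6 * β ^ 2 * ρ ^ 2, by push_cast; grind⟩

theorem approxFst_smodEq :
    (ρ ^ 2 + (α * ε) ^ 2) * (a₀ * b₀ * y₀ * z₀ * ρ ^ 4 - 4 * s * (a₀ * b₀ * w₀) * ρ ^ 3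
      + 6 * (ν * b₀) * ρ ^ 2) ≡ approxFst (s : K) a₂ b₀ b₁ b₂ y₁ y₂ + 8 * s * (b₀ * ρ ^ 3)
      [SMOD 𝒪 ∙ (α : K)] := by
  obtain ⟨r₁, h₁⟩ := smodEq_span_singleton_iff.1 h.quartic_smodEq
  obtain ⟨r₂, h₂⟩ := smodEq_span_singleton_iff.1 h.b₀_mul_y₁_sq_mul_y₂_sq_smodEq
  obtain ⟨r₃, h₃⟩ := smodEq_span_singleton_iff.1 h.b₁_sq_mul_smodEq
  obtain ⟨r₄, h₄⟩ := smodEq_span_singleton_iff.1 h.b₀_mul_y₂_sq_smodEq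
  obtain ⟨r₅, h₅⟩ := smodEq_span_singleton_iff.1 h.b₁_mul_y₂_sq_smodEq
  obtain ⟨r₆, h₆⟩ := smodEq_span_singleton_iff.1 h.a₂_mul_y₂_smodEq
  obtain ⟨r₇, h₇⟩ := smodEq_span_singleton_iff.1 h.b₂_smodEq
  refine smodEq_span_singleton_iff.2
    ⟨r₁ - (r₂ + r₃ + 3 * r₄ - 2 * s * r₅ - 3 * r₆ + 12 * r₇), ?_⟩
  push_cast
  unfold approxFst
  linear_combination h₁ - h₂ - h₃ - 3 * h₄ + 2 * s * h₅ + 3 * h₆ - 12 * h₇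
    + ρ ^ 6 * h.leading_coeff_eq - 2 * s * ρ ^ 5 * b₀ * h.a₀_mul_w₀
    - 2 * ρ ^ 4 * a₀ * y₀ * h.sign_sq

theorem approxSnd_smodEq :
    a₀ * b₀ * y₀ * z₀ * ρ ^ 6 - 6 * s * (a₀ * b₀ * w₀) * ρ ^ 5 + 15 * (ν * b₀) * ρ ^ 4
      ≡ approxSnd (s : K) a₂ b₀ b₁ b₂ y₁ y₂ + 20 * s * (b₀ * ρ ^ 3) [SMOD 𝒪 ∙ (α : K)] := by
  obtain ⟨r₂, h₂⟩ := smodEq_span_singleton_iff.1 h.b₀_mul_y₁_sq_mul_y₂_sq_smodEq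
  obtain ⟨r₃, h₃⟩ := smodEq_span_singleton_iff.1 h.b₁_sq_mul_smodEq
  obtain ⟨r₄, h₄⟩ := smodEq_span_singleton_iff.1 h.b₁_mul_y₂_sq_smodEq
  obtain ⟨r₅, h₅⟩ := smodEq_span_singleton_iff.1 h.b₁_mul_b₂_sq_smodEq
  obtain ⟨r₆, h₆⟩ := smodEq_span_singleton_iff.1 h.b₀_mul_b₂_sq_smodEq
  obtain ⟨r₇, h₇⟩ := smodEq_span_singleton_iff.1 h.a₂_mul_y₂_smodEq
  obtain ⟨r₈, h₈⟩ := smodEq_span_singleton_iff.1 h.b₂_smodEq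
  refine smodEq_span_singleton_iff.2
    ⟨-(r₂ + r₃ - 4 * s * r₄ - 2 * s * r₅ - 3 * r₆ - 5 * r₇ + 30 * r₈), ?_⟩
  push_cast
  unfold approxSnd
  linear_combination -h₂ - h₃ + 4 * s * h₄ + 2 * s * h₅ + 3 * h₆ + 5 * h₇ - 30 * h₈
    + ρ ^ 6 * h.leading_coeff_eq - 4 * s * ρ ^ 5 * b₀ * h.a₀_mul_w₀
    - ρ ^ 4 * (4 * a₀ * y₀ + 10 * (ν * b₀)) * h.sign_sq

end SlopeExpansion

/-- A `SlopeExpansion` together with the limit `ξ` of the slopes, approximated by the row `z` of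
`x (k + 4)` with errors `τ / z₀` and `τ' / z₀`. Here `u = y₀ / z₀`, so that `α * ε * u = 1 / z₀`. -/
structure LimitExpansion (s α β ρ ε ν ξ τ τ' u v lam : 𝒪)
    (a₀ a₂ b₀ b₁ b₂ y₀ y₁ y₂ w₀ z₀ z₁ z₂ : K) : Prop extends
    SlopeExpansion s α β ρ ε ν a₀ a₂ b₀ b₁ b₂ y₀ y₁ y₂ w₀ z₀ where
  u_mul_z₀ : u * z₀ = y₀
  u_mul_w₀ : u * w₀ = v
  u_mul_b₀_mul_y₀ : u * b₀ * y₀ = lam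
  vieta : w₀ ^ 2 + y₀ ^ 2 = b₀ * z₀
  z₁_eq : z₁ = ρ * z₀ - s * (α * ε) * w₀
  approx₁ : z₀ * ξ - z₁ = τ * (α * ε * u)
  approx₂ : z₁ * ξ - z₂ = τ' * (α * ε * u)

variable {ξ τ τ' u v lam : 𝒪} {z₁ z₂ : K}

namespace LimitExpansion

variable (h : LimitExpansion s α β ρ ε ν ξ τ τ' u v lam a₀ a₂ b₀ b₁ b₂ y₀ y₁ y₂ w₀ z₀ z₁ z₂)
include h

lemma limit_sub_slope : (ξ : K) - ρ = (α * ε) ^ 2 * (τ * u ^ 2 - s * v) := by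
  have hz : α * ε * u * z₀ = 1 := by
    linear_combination h.α_mul_ε_mul_y₀ + α * ε * h.u_mul_z₀
  have hdiff : (ξ - ρ) * z₀ = α * ε * (τ * u - s * w₀) := by
    linear_combination h.approx₁ + h.z₁_eq
  linear_combination α * ε * u * hdiff - (ξ - ρ) * hz - s * (α * ε) ^ 2 * h.u_mul_w₀

lemma b₀_mul_limit_smodEq : b₀ * ξ ≡ b₀ * ρ [SMOD 𝒪 ∙ (α : K)] := by
  refine smodEq_span_singleton_iff.2 ⟨ε * β * (τ * u ^ 2 - s * v), ?_⟩
  push_cast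
  linear_combination b₀ * h.limit_sub_slope
    + α * ε * (τ * u ^ 2 - s * v) * h.α_mul_ε_mul_b₀

lemma lead_mul_limit_smodEq :
    a₀ * b₀ * y₀ * z₀ * ξ ≡ a₀ * b₀ * y₀ * z₀ * ρ - s * (a₀ * b₀ * w₀) [SMOD 𝒪 ∙ (α : K)] := by
  refine smodEq_span_singleton_iff.2 ⟨τ * lam, ?_⟩
  push_cast
  linear_combination a₀ * b₀ * y₀ * (h.approx₁ + h.z₁_eq)
    + a₀ * b₀ * (τ * u - s * w₀) * h.α_mul_ε_mul_y₀ + τ * u * b₀ * h.a₀_eq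
    + τ * α * h.u_mul_b₀_mul_y₀

lemma mid_mul_limit_smodEq :
    a₀ * b₀ * w₀ * ξ ≡ a₀ * b₀ * w₀ * ρ - s * (ν * b₀) [SMOD 𝒪 ∙ (α : K)] := by
  refine smodEq_span_singleton_iff.2 ⟨β * u * v * τ + s * lam, ?_⟩
  push_cast
  linear_combination a₀ * b₀ * w₀ * h.limit_sub_slope
    + α * ε * b₀ * w₀ * (τ * u ^ 2 - s * v) * α * h.a₀_mul_ε
    + α * w₀ * (τ * u ^ 2 - s * v) * h.α_mul_ε_mul_b₀
    + α * β * (τ * u + s * w₀) * h.u_mul_w₀ - s * α * β * u * h.vieta - s * α * β * b₀ * h.u_mul_z₀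
    + s * α * (b₀ - u * y₀) * h.b₀_eq - s * b₀ * h.α_mul_b₀ + s * α * h.u_mul_b₀_mul_y₀

lemma limit_pow_smodEq (n : ℕ) :
    a₀ * b₀ * y₀ * z₀ * ξ ^ (n + 2) ≡ a₀ * b₀ * y₀ * z₀ * ρ ^ (n + 2)
      - (n + 2) * s * (a₀ * b₀ * w₀) * ρ ^ (n + 1) + (n + 2).choose 2 * (ν * b₀) * ρ ^ n
      [SMOD 𝒪 ∙ (α : K)] := by
  have hmid : -(s * (a₀ * b₀ * w₀)) * ξ ≡ -(s * (a₀ * b₀ * w₀)) * ρ + ν * b₀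
      [SMOD 𝒪 ∙ (α : K)] := by
    convert coe_mul_smodEq h.mid_mul_limit_smodEq (-s) using 1
    · push_cast; ring
    · push_cast; linear_combination -ν * b₀ * h.sign_sq
  have hlast : ν * b₀ * ξ ≡ ν * b₀ * ρ [SMOD 𝒪 ∙ (α : K)] := by
    simpa only [mul_assoc] using coe_mul_smodEq h.b₀_mul_limit_smodEq ν
  have hlead := h.lead_mul_limit_smodEq
  rw [sub_eq_add_neg] at hlead
  convert mul_pow_smodEq hlead hmid hlast n using 1
  ring

lemma y₂_mul_z₂_smodEq :
    a₀ * b₀ * y₂ * z₂ * ξ ^ 2 ≡ (ρ ^ 2 + (α * ε) ^ 2) * (a₀ * b₀ * y₀ * z₀ * ξ ^ 4)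
      [SMOD 𝒪 ∙ (α : K)] := by
  have hz₂ : z₂ = z₀ * ξ ^ 2 - α * ε * u * (ξ * τ + τ') := by
    linear_combination -h.approx₂ - ξ * h.approx₁
  have hy₂ : y₂ = (ρ ^ 2 + (α * ε) ^ 2) * y₀ := by
    linear_combination h.y₂_eq - α * ε * h.α_mul_ε_mul_y₀
  refine smodEq_span_singleton_iff.2
    ⟨-(lam * (ρ ^ 2 + (α * ε) ^ 2) * (ξ * τ + τ') * ξ ^ 2), ?_⟩
  push_cast
  rw [hz₂, hy₂]
  linear_combination -(α * ε * (ρ ^ 2 + (α * ε) ^ 2) * (ξ * τ + τ') * ξ ^ 2)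
    * a₀ * h.u_mul_b₀_mul_y₀ - α * lam * (ρ ^ 2 + (α * ε) ^ 2) * (ξ * τ + τ') * ξ ^ 2 * h.a₀_mul_ε

lemma b₂_mul_limit_smodEq : b₂ * ξ ≡ b₀ * ρ ^ 3 [SMOD 𝒪 ∙ (α : K)] := by
  have hξ : b₂ * ξ ≡ b₀ * ρ ^ 2 * ξ [SMOD 𝒪 ∙ (α : K)] := by
    simpa only [mul_comm] using coe_mul_smodEq h.b₂_smodEq ξ
  refine hξ.trans ?_
  convert coe_mul_smodEq h.b₀_mul_limit_smodEq (ρ ^ 2) using 1 <;> push_cast <;> ring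

theorem approxFst_smodEq_limit :
    a₀ * b₀ * y₂ * z₂ * ξ ^ 2 ≡ approxFst (s : K) a₂ b₀ b₁ b₂ y₁ y₂ + 8 * s * (b₂ * ξ)
      [SMOD 𝒪 ∙ (α : K)] := by
  have hpow : (ρ ^ 2 + (α * ε) ^ 2) * (a₀ * b₀ * y₀ * z₀ * ξ ^ 4) ≡
      (ρ ^ 2 + (α * ε) ^ 2) * (a₀ * b₀ * y₀ * z₀ * ρ ^ 4 - 4 * s * (a₀ * b₀ * w₀) * ρ ^ 3
        + 6 * (ν * b₀) * ρ ^ 2) [SMOD 𝒪 ∙ (α : K)] := by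
    convert coe_mul_smodEq (h.limit_pow_smodEq 2) (ρ ^ 2 + (α * ε) ^ 2) using 1 <;> push_cast
    · rfl
    · norm_num [Nat.choose]
  have hb₂ : 8 * s * (b₂ * ξ) ≡ 8 * s * (b₀ * ρ ^ 3) [SMOD 𝒪 ∙ (α : K)] := by
    simpa using coe_mul_smodEq h.b₂_mul_limit_smodEq (8 * s)
  exact h.y₂_mul_z₂_smodEq.trans <| hpow.trans <|
    h.approxFst_smodEq.trans (SModEq.rfl.add hb₂.symm)

theorem approxSnd_smodEq_limit :
    a₀ * b₀ * y₀ * z₀ * ξ ^ 6 ≡ approxSnd (s : K) a₂ b₀ b₁ b₂ y₁ y₂ + 20 * s * (b₂ * ξ)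
      [SMOD 𝒪 ∙ (α : K)] := by
  have hpow : a₀ * b₀ * y₀ * z₀ * ξ ^ 6 ≡ a₀ * b₀ * y₀ * z₀ * ρ ^ 6
      - 6 * s * (a₀ * b₀ * w₀) * ρ ^ 5 + 15 * (ν * b₀) * ρ ^ 4 [SMOD 𝒪 ∙ (α : K)] := by
    convert h.limit_pow_smodEq 4 using 1
    norm_num [Nat.choose]
  have hb₂ : 20 * s * (b₂ * ξ) ≡ 20 * s * (b₀ * ρ ^ 3) [SMOD 𝒪 ∙ (α : K)] := by
    simpa using coe_mul_smodEq h.b₂_mul_limit_smodEq (20 * s)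
  exact hpow.trans <| h.approxSnd_smodEq.trans (SModEq.rfl.add hb₂.symm)

end LimitExpansion

end Congruence

section Bounded

open Asymptotics

/-- The ring of bounded real functions on `ι`; congruences modulo `boundedSubring ι ∙ w` express
equality up to an error `O(w)`, uniformly on `ι`. -/
def boundedSubring (ι : Type*) : Subring (ι → ℝ) :=
  (boundedFilterSubalgebra ℝ (⊤ : Filter ι)).toSubring

variable {ι : Type*}

lemma mem_boundedSubring_iff {f : ι → ℝ} : f ∈ boundedSubring ι ↔ ∃ C, ∀ i, |f i| ≤ C := by
  change f =O[⊤] (1 : ι → ℝ) ↔ _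
  simp [isBigO_top]

lemma const_mem_boundedSubring (c : ℝ) : (fun _ => c) ∈ boundedSubring ι :=
  mem_boundedSubring_iff.2 ⟨|c|, fun _ => le_rfl⟩

lemma exists_abs_sub_le_of_smodEq {u v w : ι → ℝ} (h : u ≡ v [SMOD boundedSubring ι ∙ w]) :
    ∃ C, ∀ i, |u i - v i| ≤ C * |w i| := by
  obtain ⟨⟨r, hr⟩, h⟩ := smodEq_span_singleton_iff.1 h
  obtain ⟨C, hC⟩ := mem_boundedSubring_iff.1 hr
  refine ⟨C, fun i => ?_⟩
  rw [h, Pi.add_apply, add_sub_cancel_left, Pi.mul_apply, abs_mul]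
  exact mul_le_mul_of_nonneg_right (hC i) (abs_nonneg _)

end Bounded

lemma neg_one_pow_sq (R : Type*) [Ring R] (n : ℕ) : ((-1 : R) ^ n) ^ 2 = 1 := by
  rw [← pow_mul, mul_comm, pow_mul, neg_one_sq, one_pow]

lemma neg_one_pow_mem_boundedSubring :
    (fun k : ℕ+ => (-1 : ℝ) ^ (k : ℕ)) ∈ boundedSubring ℕ+ :=
  mem_boundedSubring_iff.2 ⟨1, fun k => by simp⟩

namespace MarkoffSeq

variable {ξ : ℝ} {x : ℕ → Matrix (Fin 2) (Fin 2) ℤ} {k : ℕ}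

section Identities

lemma apply_zero_one (hx : MarkoffSeq ξ x) (hk : 1 ≤ k) : x k 0 1 = x k 1 0 := hx.1 k hk

lemma det_eq_one (hx : MarkoffSeq ξ x) (hk : 1 ≤ k) : (x k).det = 1 := hx.2.1 k hk

lemma eq_mul (hx : MarkoffSeq ξ x) (hk : 1 ≤ k) : x (k + 2) = x k * Mmat k * x (k + 1) := by
  obtain ⟨-, -, _, _, _, -, -, -, h⟩ := hx
  exact (h k hk).2.2.1.2

lemma adjugate_mul (hx : MarkoffSeq ξ x) (hk : 1 ≤ k) :
    (x k).adjugate * x (k + 2) = Mmat k * x (k + 1) := by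
  rw [hx.eq_mul hk, mul_assoc, ← mul_assoc, Matrix.adjugate_mul, hx.det_eq_one hk, one_smul,
    one_mul]

lemma mul_adjugate (hx : MarkoffSeq ξ x) (hk : 1 ≤ k) :
    x (k + 2) * (x (k + 1)).adjugate = x k * Mmat k := by
  rw [hx.eq_mul hk, mul_assoc, Matrix.mul_adjugate, hx.det_eq_one (by lia), one_smul, mul_one]

lemma mul_sub_sq_eq_one (hx : MarkoffSeq ξ x) (hk : 1 ≤ k) :
    (x k 0 0 * x k 1 1 - x k 0 1 ^ 2 : ℝ) = 1 := by
  have h := hx.det_eq_one hk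
  rw [Matrix.det_fin_two, ← hx.apply_zero_one hk, ← sq] at h
  exact_mod_cast h

lemma adjugate_mul_apply (hx : MarkoffSeq ξ x) (hk : 1 ≤ k) :
    (x k 1 1 : ℝ) * x (k + 2) 0 0 - x k 0 1 * x (k + 2) 0 1
        = 3 * x (k + 1) 0 0 + (-1) ^ k * x (k + 1) 0 1 ∧
      (x k 0 0 : ℝ) * x (k + 2) 0 1 - x k 0 1 * x (k + 2) 0 0 = -(-1) ^ k * x (k + 1) 0 0 := by
  have h (i : Fin 2) := congrFun₂ (hx.adjugate_mul hk) i 0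
  simp only [Matrix.adjugate_fin_two, Matrix.mul_apply, Fin.sum_univ_two, Mmat,
    ← hx.apply_zero_one hk, ← hx.apply_zero_one (k := k + 1) (by lia),
    ← hx.apply_zero_one (k := k + 2) (by lia), Fin.forall_fin_two, Matrix.of_apply,
    Matrix.cons_val', Matrix.cons_val_zero, Matrix.cons_val_one, Matrix.cons_val_fin_one] at h
  rify at h
  exact ⟨by linear_combination h.1, by linear_combination h.2⟩

lemma mul_adjugate_apply (hx : MarkoffSeq ξ x) (hk : 1 ≤ k) :
    (x (k + 1) 1 1 : ℝ) * x (k + 2) 0 0 - x (k + 1) 0 1 * x (k + 2) 0 1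
        = 3 * x k 0 0 - (-1) ^ k * x k 0 1 ∧
      (x (k + 1) 0 0 : ℝ) * x (k + 2) 0 1 - x (k + 1) 0 1 * x (k + 2) 0 0
        = (-1) ^ k * x k 0 0 := by
  have h (i : Fin 2) := congrFun₂ (hx.mul_adjugate hk) 0 i
  simp only [Matrix.adjugate_fin_two, Matrix.mul_apply, Fin.sum_univ_two, Mmat,
    ← hx.apply_zero_one (k := k + 1) (by lia), Fin.forall_fin_two, Matrix.of_apply,
    Matrix.cons_val', Matrix.cons_val_zero, Matrix.cons_val_one, Matrix.cons_val_fin_one] at h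
  rify at h
  exact ⟨by linear_combination h.1, by linear_combination h.2⟩

lemma apply_zero_zero (hx : MarkoffSeq ξ x) (hk : 1 ≤ k) :
    (x (k + 2) 0 0 : ℝ) = 3 * x k 0 0 * x (k + 1) 0 0
      + (-1) ^ k * (x k 0 0 * x (k + 1) 0 1 - x k 0 1 * x (k + 1) 0 0) := by
  obtain ⟨h₀, h₁⟩ := hx.adjugate_mul_apply hk
  linear_combination x k 0 0 * h₀ + x k 0 1 * h₁ - x (k + 2) 0 0 * hx.mul_sub_sq_eq_one hk

lemma markoff (hx : MarkoffSeq ξ x) (hk : 1 ≤ k) :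
    (x k 0 0 : ℝ) ^ 2 + x (k + 1) 0 0 ^ 2 + x (k + 2) 0 0 ^ 2
      = 3 * x k 0 0 * x (k + 1) 0 0 * x (k + 2) 0 0 := by
  linear_combination x (k + 2) 0 0 * hx.apply_zero_zero hk
    - (-1) ^ k * x k 0 0 * (hx.mul_adjugate_apply hk).2
    + (-1) ^ k * x (k + 1) 0 0 * (hx.adjugate_mul_apply hk).2
    - (x k 0 0 ^ 2 + x (k + 1) 0 0 ^ 2) * neg_one_pow_sq ℝ k

lemma vieta (hx : MarkoffSeq ξ x) (hk : 1 ≤ k) :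
    (x (k + 3) 0 0 : ℝ) = 3 * x (k + 1) 0 0 * x (k + 2) 0 0 - x k 0 0 := by
  linear_combination hx.apply_zero_zero (k := k + 1) (by lia)
    - (-1) ^ k * (hx.mul_adjugate_apply hk).2
    - x k 0 0 * neg_one_pow_sq ℝ k

end Identities

section Bounds

lemma abs_apply_le_Xnorm (x : ℕ → Matrix (Fin 2) (Fin 2) ℤ) (k : ℕ) (j : Fin 2) :
    |(x k 0 j : ℝ)| ≤ Xnorm x k := by
  fin_cases j <;> simp [Xnorm]

lemma Xnorm_lt (hx : MarkoffSeq ξ x) (hk : 1 ≤ k) :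
    Xnorm x k < (1 + ξ ^ 2) * |(x k 0 0 : ℝ)| := by
  obtain ⟨-, -, _, _, _, -, -, -, h⟩ := hx
  exact (h k hk).2.2.2.2

lemma Xnorm_le_of_le (hx : MarkoffSeq ξ x) (hk : 1 ≤ k) {n : ℕ} (hn : k ≤ n) :
    Xnorm x k ≤ Xnorm x n := by
  obtain ⟨-, -, _, _, _, -, -, -, h⟩ := hx
  induction n, hn using Nat.le_induction with
  | base => rfl
  | succ n hn ih => exact ih.trans (h n (hk.trans hn)).2.2.2.1.le

lemma apply_zero_zero_ne_zero (hx : MarkoffSeq ξ x) (hk : 1 ≤ k) : (x k 0 0 : ℝ) ≠ 0 := by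
  intro h₀
  have h := (abs_apply_le_Xnorm x k 0).trans_lt (hx.Xnorm_lt hk)
  simp [h₀] at h

lemma Xnorm_pos (hx : MarkoffSeq ξ x) (hk : 1 ≤ k) : 0 < Xnorm x k :=
  (abs_pos.2 (hx.apply_zero_zero_ne_zero hk)).trans_le (abs_apply_le_Xnorm x k 0)

lemma inv_mem_boundedSubring (hx : MarkoffSeq ξ x) (m : ℕ) :
    (fun k : ℕ+ => (x (k + m) 0 0 : ℝ)⁻¹) ∈ boundedSubring ℕ+ := by
  refine mem_boundedSubring_iff.2 ⟨1, fun k => ?_⟩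
  rw [abs_inv]
  refine inv_le_one_of_one_le₀ ?_
  have h₀ := hx.apply_zero_zero_ne_zero (k := k + m) (Nat.le_add_right_of_le k.pos)
  exact_mod_cast Int.one_le_abs (Int.cast_ne_zero.1 h₀)

lemma div_mem_boundedSubring (hx : MarkoffSeq ξ x) {m n : ℕ} (hmn : m ≤ n) (j : Fin 2) :
    (fun k : ℕ+ => (x (k + m) 0 j / x (k + n) 0 0 : ℝ)) ∈ boundedSubring ℕ+ := by
  refine mem_boundedSubring_iff.2 ⟨1 + ξ ^ 2, fun k => ?_⟩
  have hk := k.pos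
  rw [abs_div, div_le_iff₀ (abs_pos.2 (hx.apply_zero_zero_ne_zero (by lia)))]
  calc |(x (k + m) 0 j : ℝ)| ≤ Xnorm x (k + m) := abs_apply_le_Xnorm x _ j
    _ ≤ Xnorm x (k + n) := hx.Xnorm_le_of_le (by lia) (by lia)
    _ ≤ (1 + ξ ^ 2) * |(x (k + n) 0 0 : ℝ)| := (hx.Xnorm_lt (by lia)).le

lemma mul_div_mem_boundedSubring (hx : MarkoffSeq ξ x) (m : ℕ) :
    (fun k : ℕ+ => (x (k + m) 0 0 * x (k + (m + 1)) 0 0 / x (k + (m + 2)) 0 0 : ℝ))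
      ∈ boundedSubring ℕ+ := by
  have hα := hx.div_mem_boundedSubring (Nat.le_add_right m 2) 0
  have hβ := hx.div_mem_boundedSubring (show m + 1 ≤ m + 2 by lia) 0
  convert mul_mem (const_mem_boundedSubring 3⁻¹)
    (add_mem (add_mem (one_mem _) (pow_mem hα 2)) (pow_mem hβ 2)) using 1
  funext k
  have hy := hx.apply_zero_zero_ne_zero (k := k + (m + 2)) (Nat.le_add_right_of_le k.pos)
  simp only [Pi.mul_apply, Pi.add_apply, Pi.pow_apply, Pi.one_apply]
  field_simp
  linear_combination -hx.markoff (k := k + m) (Nat.le_add_right_of_le k.pos)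

lemma mul_approx_mem_boundedSubring (hx : MarkoffSeq ξ x) (m : ℕ) (i : Fin 2) :
    (fun k : ℕ+ => x (k + m) 0 0 * (x (k + m) 0 i * ξ - x (k + m) i 1 : ℝ))
      ∈ boundedSubring ℕ+ := by
  obtain ⟨-, -, _, _, c₃, -, -, -, h⟩ := id hx
  refine mem_boundedSubring_iff.2 ⟨c₃, fun k => ?_⟩
  have hk : 1 ≤ k + m := Nat.le_add_right_of_le k.pos
  have happrox : |(x (k + m) 0 i * ξ - x (k + m) i 1 : ℝ)| ≤ c₃ / Xnorm x (k + m) := by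
    fin_cases i
    exacts [(h _ hk).2.1.1, (h _ hk).2.1.2]
  have hX := hx.Xnorm_pos hk
  rw [abs_mul, ← mul_div_cancel₀ c₃ hX.ne']
  gcongr
  exact abs_apply_le_Xnorm x _ 0

lemma exists_abs_sub_le_div_Xnorm (hx : MarkoffSeq ξ x) {u v : ℕ+ → ℝ}
    (h : u ≡ v [SMOD boundedSubring ℕ+ ∙ fun k : ℕ+ => (x k 0 0 / x (k + 2) 0 0 : ℝ)]) :
    ∃ c, 0 < c ∧ ∀ k : ℕ+, |u k - v k| ≤ c / Xnorm x (k + 1) := by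
  obtain ⟨C, hC⟩ := exists_abs_sub_le_of_smodEq h
  obtain ⟨N, hN⟩ := mem_boundedSubring_iff.1 (hx.mul_div_mem_boundedSubring 0)
  refine ⟨|C| * ((1 + ξ ^ 2) * |N|) + 1, by positivity, fun k => (hC k).trans ?_⟩
  rw [le_div_iff₀ (hx.Xnorm_pos (by lia))]
  have hα : |(x k 0 0 / x (k + 2) 0 0 : ℝ)| * |(x (k + 1) 0 0 : ℝ)| ≤ |N| := by
    rw [← abs_mul, div_mul_eq_mul_div]
    exact (hN k).trans (le_abs_self N)
  calc C * |(x k 0 0 / x (k + 2) 0 0 : ℝ)| * Xnorm x (k + 1)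
      ≤ |C| * |(x k 0 0 / x (k + 2) 0 0 : ℝ)| * ((1 + ξ ^ 2) * |(x (k + 1) 0 0 : ℝ)|) := by
        gcongr
        · exact (hx.Xnorm_pos (by lia)).le
        · exact le_abs_self C
        · exact (hx.Xnorm_lt (by lia)).le
    _ = |C| * ((1 + ξ ^ 2) * (|(x k 0 0 / x (k + 2) 0 0 : ℝ)| * |(x (k + 1) 0 0 : ℝ)|)) := by ring
    _ ≤ |C| * ((1 + ξ ^ 2) * |N|) + 1 := by
        refine le_add_of_le_of_nonneg ?_ zero_le_one
        gcongr

end Bounds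

section Expansion

/-- The sequence of `(i, j)` entries of the matrices `x (k + m)`, for `k ≥ 1`. -/
def entry (x : ℕ → Matrix (Fin 2) (Fin 2) ℤ) (m : ℕ) (i j : Fin 2) : ℕ+ → ℝ :=
  fun k => x (k + m) i j

lemma slopeExpansion (hx : MarkoffSeq ξ x) :
    SlopeExpansion ⟨_, neg_one_pow_mem_boundedSubring⟩ ⟨_, hx.div_mem_boundedSubring zero_le_two 0⟩
      ⟨_, hx.div_mem_boundedSubring one_le_two 0⟩ ⟨_, hx.div_mem_boundedSubring (le_refl 2) 1⟩
      ⟨_, hx.inv_mem_boundedSubring 0⟩ ⟨_, hx.mul_div_mem_boundedSubring 0⟩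
      (entry x 0 0 0) (entry x 0 1 1) (entry x 1 0 0) (entry x 1 0 1) (entry x 1 1 1)
      (entry x 2 0 0) (entry x 2 0 1) (entry x 2 1 1) (entry x 3 0 0) (entry x 4 0 0) where
  sign_sq := funext fun k => neg_one_pow_sq ℝ k
  markoff := funext fun k => by
    have hy := hx.apply_zero_zero_ne_zero (k := k + 2) (by lia)
    simp only [add_zero, zero_add, Pi.mul_apply, Pi.ofNat_apply, Pi.add_apply, Pi.pow_apply]
    field_simp
    linear_combination -hx.markoff k.pos
  α_mul_b₀ := funext fun k => div_mul_eq_mul_div _ _ _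
  a₀_mul_ε := funext fun k => mul_inv_cancel₀ (hx.apply_zero_zero_ne_zero k.pos)
  a₀_eq := funext fun k => (div_mul_cancel₀ _ (hx.apply_zero_zero_ne_zero (by lia))).symm
  b₀_eq := funext fun k => (div_mul_cancel₀ _ (hx.apply_zero_zero_ne_zero (by lia))).symm
  y₁_eq := funext fun k => (div_mul_cancel₀ _ (hx.apply_zero_zero_ne_zero (by lia))).symm
  y₂_eq := funext fun k => by
    have ha := hx.apply_zero_zero_ne_zero k.pos
    have hy := hx.apply_zero_zero_ne_zero (k := k + 2) (by lia)
    simp only [entry, add_zero, Pi.add_apply, Pi.mul_apply, Pi.pow_apply]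
    field_simp
    linear_combination hx.mul_sub_sq_eq_one (k := k + 2) (by lia)
  b₁_eq := funext fun k => by
    have hy := hx.apply_zero_zero_ne_zero (k := k + 2) (by lia)
    simp only [entry, add_zero, Pi.sub_apply, Pi.mul_apply]
    field_simp
    linear_combination -(hx.mul_adjugate_apply k.pos).2
  b₂_eq := funext fun k => by
    have ha := hx.apply_zero_zero_ne_zero k.pos
    have hy := hx.apply_zero_zero_ne_zero (k := k + 2) (by lia)
    simp only [entry, add_zero, Pi.add_apply, Pi.sub_apply, Pi.mul_apply, Pi.pow_apply,
      Pi.ofNat_apply]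
    field_simp
    linear_combination x (k + 2) 0 0 * (hx.mul_adjugate_apply k.pos).1
      - x (k + 2) 0 1 * (hx.mul_adjugate_apply k.pos).2
      + (-1) ^ (k : ℕ) * (hx.adjugate_mul_apply k.pos).2 - x (k + 1) 0 0 * neg_one_pow_sq ℝ k
  a₂_eq := funext fun k => by
    have hy := hx.apply_zero_zero_ne_zero (k := k + 2) (by lia)
    simp only [entry, add_zero, Pi.add_apply, Pi.sub_apply, Pi.mul_apply, Pi.pow_apply,
      Pi.ofNat_apply]
    field_simp
    linear_combination x (k + 2) 0 0 * (hx.adjugate_mul_apply k.pos).1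
      - x (k + 2) 0 1 * (hx.adjugate_mul_apply k.pos).2
      - (-1) ^ (k : ℕ) * (hx.mul_adjugate_apply k.pos).2 - x k 0 0 * neg_one_pow_sq ℝ k
  w₀_eq := funext fun k => hx.vieta k.pos
  z₀_eq := funext fun k => hx.vieta (k := k + 1) (by lia)

lemma limitExpansion (hx : MarkoffSeq ξ x) :
    LimitExpansion ⟨_, neg_one_pow_mem_boundedSubring⟩ ⟨_, hx.div_mem_boundedSubring zero_le_two 0⟩
      ⟨_, hx.div_mem_boundedSubring one_le_two 0⟩ ⟨_, hx.div_mem_boundedSubring (le_refl 2) 1⟩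
      ⟨_, hx.inv_mem_boundedSubring 0⟩ ⟨_, hx.mul_div_mem_boundedSubring 0⟩
      ⟨_, const_mem_boundedSubring ξ⟩ ⟨_, hx.mul_approx_mem_boundedSubring 4 0⟩
      ⟨_, hx.mul_approx_mem_boundedSubring 4 1⟩
      ⟨_, hx.div_mem_boundedSubring (show 2 ≤ 4 by lia) 0⟩ ⟨_, hx.mul_div_mem_boundedSubring 2⟩
      (⟨_, hx.mul_div_mem_boundedSubring 1⟩ * ⟨_, hx.mul_div_mem_boundedSubring 2⟩)
      (entry x 0 0 0) (entry x 0 1 1) (entry x 1 0 0) (entry x 1 0 1) (entry x 1 1 1)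
      (entry x 2 0 0) (entry x 2 0 1) (entry x 2 1 1) (entry x 3 0 0) (entry x 4 0 0)
      (entry x 4 0 1) (entry x 4 1 1) where
  toSlopeExpansion := hx.slopeExpansion
  u_mul_z₀ := funext fun k => div_mul_cancel₀ _ (hx.apply_zero_zero_ne_zero (by lia))
  u_mul_w₀ := funext fun k => div_mul_eq_mul_div _ _ _
  u_mul_b₀_mul_y₀ := funext fun k => by
    have hw := hx.apply_zero_zero_ne_zero (k := k + 3) (by lia)
    have hz := hx.apply_zero_zero_ne_zero (k := k + 4) (by lia)
    simp only [entry, Pi.mul_apply, MulMemClass.mk_mul_mk]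
    field_simp
  vieta := funext fun k => by
    simp only [entry, Pi.add_apply, Pi.mul_apply, Pi.pow_apply]
    linear_combination hx.markoff (k := k + 1) (by lia)
      - x (k + 1) 0 0 * hx.vieta (k := k + 1) (by lia)
  z₁_eq := funext fun k => by
    have ha := hx.apply_zero_zero_ne_zero k.pos
    have hy := hx.apply_zero_zero_ne_zero (k := k + 2) (by lia)
    simp only [entry, add_zero, Pi.sub_apply, Pi.mul_apply]
    field_simp
    linear_combination (hx.adjugate_mul_apply (k := k + 2) (by lia)).2
  approx₁ := funext fun k => by
    have ha := hx.apply_zero_zero_ne_zero k.pos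
    have hy := hx.apply_zero_zero_ne_zero (k := k + 2) (by lia)
    have hz := hx.apply_zero_zero_ne_zero (k := k + 4) (by lia)
    simp only [entry, add_zero, Pi.sub_apply, Pi.mul_apply]
    field_simp
  approx₂ := funext fun k => by
    have ha := hx.apply_zero_zero_ne_zero k.pos
    have hy := hx.apply_zero_zero_ne_zero (k := k + 2) (by lia)
    have hz := hx.apply_zero_zero_ne_zero (k := k + 4) (by lia)
    simp only [entry, add_zero, Pi.sub_apply, Pi.mul_apply]
    field_simp

lemma exists_abs_sub_approxFst_le (hx : MarkoffSeq ξ x) :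
    ∃ c, 0 < c ∧ ∀ k : ℕ+, |(x k 0 0 : ℝ) * x (k + 1) 0 0 * x (k + 2) 1 1 * x (k + 4) 1 1 * ξ ^ 2
      - 8 * (-1) ^ (k : ℕ) * x (k + 1) 1 1 * ξ
      - (approxFst ((-1) ^ (k : ℕ)) (x k 1 1) (x (k + 1) 0 0) (x (k + 1) 0 1) (x (k + 1) 1 1)
          (x (k + 2) 0 1) (x (k + 2) 1 1) : ℤ)| ≤ c / Xnorm x (k + 1) := by
  obtain ⟨c, hc, h⟩ := hx.exists_abs_sub_le_div_Xnorm hx.limitExpansion.approxFst_smodEq_limit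
  refine ⟨c, hc, fun k => ?_⟩
  convert h k using 2
  simp only [approxFst, Int.cast_add, Int.cast_sub, Int.cast_mul, Int.cast_ofNat, Int.cast_pow,
    Int.cast_neg, Int.cast_one, Pi.mul_apply, entry, add_zero, Pi.pow_apply, Pi.add_apply,
    Pi.sub_apply, Pi.ofNat_apply]
  ring

lemma exists_abs_sub_approxSnd_le (hx : MarkoffSeq ξ x) :
    ∃ c, 0 < c ∧ ∀ k : ℕ+, |(x k 0 0 : ℝ) * x (k + 1) 0 0 * x (k + 2) 0 0 * x (k + 4) 0 0 * ξ ^ 6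
      - 20 * (-1) ^ (k : ℕ) * x (k + 1) 1 1 * ξ
      - (approxSnd ((-1) ^ (k : ℕ)) (x k 1 1) (x (k + 1) 0 0) (x (k + 1) 0 1) (x (k + 1) 1 1)
          (x (k + 2) 0 1) (x (k + 2) 1 1) : ℤ)| ≤ c / Xnorm x (k + 1) := by
  obtain ⟨c, hc, h⟩ := hx.exists_abs_sub_le_div_Xnorm hx.limitExpansion.approxSnd_smodEq_limit
  refine ⟨c, hc, fun k => ?_⟩
  convert h k using 2
  simp only [approxSnd, Int.cast_add, Int.cast_sub, Int.cast_mul, Int.cast_ofNat, Int.cast_pow,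
    Int.cast_neg, Int.cast_one, Pi.mul_apply, entry, add_zero, Pi.pow_apply, Pi.add_apply,
    Pi.sub_apply, Pi.ofNat_apply]
  ring

end Expansion

end MarkoffSeq

theorem stmt16 (ξ : ℝ) (x : ℕ → Matrix (Fin 2) (Fin 2) ℤ) (hx : MarkoffSeq ξ x) :
    ∃ c : ℝ, 0 < c ∧ ∀ k, 1 ≤ k →
      (∃ n : ℤ, |(x k 0 0 : ℝ) * (x (k+1) 0 0 : ℝ) * (x (k+2) 1 1 : ℝ) *
          (x (k+4) 1 1 : ℝ) * ξ^2 - 8 * (-1)^k * (x (k+1) 1 1 : ℝ) * ξ - (n : ℝ)|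
          ≤ c / Xnorm x (k+1)) ∧
      (∃ n : ℤ, |(x k 0 0 : ℝ) * (x (k+1) 0 0 : ℝ) * (x (k+2) 0 0 : ℝ) *
          (x (k+4) 0 0 : ℝ) * ξ^6 - 20 * (-1)^k * (x (k+1) 1 1 : ℝ) * ξ - (n : ℝ)|
          ≤ c / Xnorm x (k+1)) := by
  obtain ⟨c₁, hc₁, h₁⟩ := hx.exists_abs_sub_approxFst_le
  obtain ⟨c₂, -, h₂⟩ := hx.exists_abs_sub_approxSnd_le
  refine ⟨max c₁ c₂, lt_max_of_lt_left hc₁, fun k hk => ?_⟩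
  lift k to ℕ+ using hk
  have hX := (hx.Xnorm_pos (k := k + 1) (by lia)).le
  exact ⟨⟨_, (h₁ k).trans (div_le_div_of_nonneg_right (le_max_left _ _) hX)⟩,
    ⟨_, (h₂ k).trans (div_le_div_of_nonneg_right (le_max_right _ _) hX)⟩⟩
end
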